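/- arXiv:1307.6808 — 3 statements merged into one kernel-verified Lean document; each statement's English description precedes it below -/
import Mathlib

section
/- Assume in addition the unitarity condition: R(u) · P R(−u) P = γ(u) · Id_{V⊗V} for all u ∈ ℂ, where γ : ℂ → ℂ. Let n ≥ 2, c = (c_1,…,c_n) ∈ ℂ^n, and k ∈ {1,…,n−1} with γ(c_k−c_{k+1}) ≠ 0, and set A_k := P_{k,k+1} R_{k+1,k}(c_{k+1}−c_k) ∈ End(V^{⊗n}), where R_{k+1,k}(u) := P R(u) P acting on the factors k, k+1. Let c^{(s_k)} be obtained from c by exchanging c_k and c_{k+1}, and let W_c = Im F(c), W_{c^{(s_k)}} = Im F(c^{(s_k)}). If e_1, …, e_l ∈ V^{⊗n} are such that {F(c)e_1, …, F(c)e_l} is a basis of W_c, then {A_k F(c)e_1, …, A_k F(c)e_l} is a basis of W_{c^{(s_k)}}; in particular dim W_c = dim W_{c^{(s_k)}}. -/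
/-!
We model the finite-dimensional complex vector space `V` as `ℂ^N` (i.e. `Fin N → ℂ`),
so that `V^{⊗ n}` is `(Fin n → Fin N) → ℂ` and endomorphisms of `V^{⊗ n}` are matrices
indexed by multi-indices `Fin n → Fin N`.
-/

open scoped BigOperators

noncomputable section

/-- Endomorphisms of `V ⊗ V` for `V = ℂ^N`. -/
abbrev End2 (N : ℕ) := Matrix (Fin N × Fin N) (Fin N × Fin N) ℂ

/-- Endomorphisms of `V^{⊗ n}` for `V = ℂ^N`. -/
abbrev EndT (N n : ℕ) := Matrix (Fin n → Fin N) (Fin n → Fin N) ℂ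

/-- `X_{a,b}` : the endomorphism `X` of `V ⊗ V` applied to the tensor factors `a` and `b`
(in that order) of `V^{⊗ n}`, and the identity on all other factors. -/
def op2 (N n : ℕ) (X : End2 N) (a b : Fin n) : EndT N n :=
  fun f g => X (f a, f b) (g a, g b) *
    ∏ i : Fin n, if i ≠ a ∧ i ≠ b then (if f i = g i then (1 : ℂ) else 0) else 1

/-- The flip (permutation) operator `P : x ⊗ y ↦ y ⊗ x` on `V ⊗ V`. -/
def flipMat (N : ℕ) : End2 N := fun p q => if p.1 = q.2 ∧ p.2 = q.1 then 1 else 0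

/-- `R` is a solution of the Yang--Baxter equation (with additive spectral parameters)
on `V ⊗ V ⊗ V`:  `R₁₂(u) R₁₃(u+v) R₂₃(v) = R₂₃(v) R₁₃(u+v) R₁₂(u)`. -/
def YangBaxter (N : ℕ) (R : ℂ → End2 N) : Prop :=
  ∀ u v : ℂ,
    op2 N 3 (R u) 0 1 * op2 N 3 (R (u + v)) 0 2 * op2 N 3 (R v) 1 2 =
    op2 N 3 (R v) 1 2 * op2 N 3 (R (u + v)) 0 2 * op2 N 3 (R u) 0 1

/-- The fused operator `R_{c,c'}(u)`, acting on `V^{⊗ m}`, where the `n` factors of the first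
block are embedded via `a` and the `n'` factors of the second block via `b`:
`R_{c,c'}(u) = ∏→_{i=1..n'} [ R_{n,i'}(u+c_n−c'_i) ⋯ R_{2,i'}(u+c_2−c'_i) R_{1,i'}(u+c_1−c'_i) ]`. -/
def fusedOp (N : ℕ) (R : ℂ → End2 N) {m n n' : ℕ} (a : Fin n → Fin m) (b : Fin n' → Fin m)
    (c : Fin n → ℂ) (c' : Fin n' → ℂ) (u : ℂ) : EndT N m :=
  ((List.finRange n').map fun i =>
    (((List.finRange n).reverse).map fun k =>
      op2 N m (R (u + c k - c' i)) (a k) (b i)).prod).prod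

/-- The list of pairs `(i,j)` with `i < j`, in lexicographic order. -/
def lexPairs (n : ℕ) : List (Fin n × Fin n) :=
  (List.finRange n).flatMap fun i =>
    ((List.finRange n).filter fun j => decide (i < j)).map fun j => (i, j)

/-- The operator `F(c) = ∏→_{1 ≤ i < j ≤ n} R_{i,j}(c_i − c_j)` on `V^{⊗ n}`
(product over the pairs `i < j` in lexicographic order). -/
def Fop (N : ℕ) (R : ℂ → End2 N) {n : ℕ} (c : Fin n → ℂ) : EndT N n :=
  ((lexPairs n).map fun p => op2 N n (R (c p.1 - c p.2)) p.1 p.2).prod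

/-- The endomorphism of `V^{⊗ n}` embedded into `V^{⊗ m}`, acting on the factors listed
by `e` and identically on all other factors. -/
def opBlock (N : ℕ) {m n : ℕ} (e : Fin n → Fin m) (X : EndT N n) : EndT N m :=
  fun f g => X (f ∘ e) (g ∘ e) *
    ∏ i : Fin m, if ∀ k, e k ≠ i then (if f i = g i then (1 : ℂ) else 0) else 1

/-- The operator `P_π` on `V^{⊗ n}` permuting the tensor factors:
`P_π (x_1 ⊗ ⋯ ⊗ x_n) = x_{π(1)} ⊗ ⋯ ⊗ x_{π(n)}`. -/
def permMat (N n : ℕ) (π : Equiv.Perm (Fin n)) : EndT N n :=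
  fun f g => if f = g ∘ π then 1 else 0

/-- The tensor product of a vector of `V^{⊗ n}` and a vector of `V^{⊗ n'}`,
as a vector of `V^{⊗ (n+n')}`. -/
def tensVec (N : ℕ) {n n' : ℕ} (x : (Fin n → Fin N) → ℂ) (y : (Fin n' → Fin N) → ℂ) :
    (Fin (n + n') → Fin N) → ℂ :=
  fun f => x (fun i => f (Fin.castAdd n' i)) * y (fun j => f (Fin.natAdd n j))

end

section ListProd

variable {M ι : Type*} [Monoid M]

theorem SemiconjBy.list_prod_map {a : M} {f g : ι → M} {L : List ι}
    (h : ∀ i ∈ L, SemiconjBy a (f i) (g i)) :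
    SemiconjBy a (L.map f).prod (L.map g).prod := by
  induction L with
  | nil => simp
  | cons x L ih =>
    simp only [List.map_cons, List.prod_cons]
    exact (h x (by simp)).mul_right (ih fun i hi => h i (by simp [hi]))

theorem Commute.list_prod_map {a : M} {f : ι → M} {L : List ι}
    (h : ∀ i ∈ L, Commute a (f i)) : Commute a (L.map f).prod :=
  SemiconjBy.list_prod_map h

theorem List.prod_map_mul_prod_map_of_pairwise_commute {f g : ι → M} {L : List ι}
    (h : L.Pairwise fun i j => Commute (g i) (f j)) :
    (L.map f).prod * (L.map g).prod = (L.map fun i => f i * g i).prod := by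
  induction L with
  | nil => simp
  | cons x L ih =>
    rw [List.pairwise_cons] at h
    simp only [List.map_cons, List.prod_cons, ← ih h.2]
    have hc : Commute (g x) (L.map f).prod := Commute.list_prod_map h.1
    simp only [mul_assoc]
    rw [← mul_assoc (L.map f).prod, ← hc.eq, mul_assoc]

end ListProd

theorem List.exists_finRange_eq_append {n : ℕ} {a b : Fin n} (hab : (b : ℕ) = a + 1) :
    ∃ L₁ L₂ : List (Fin n), List.finRange n = L₁ ++ a :: b :: L₂ := by
  refine ⟨(List.finRange n).take a, (List.finRange n).drop (a + 2), ?_⟩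
  conv_lhs => rw [← List.take_append_drop a (List.finRange n)]
  rw [List.drop_eq_getElem_cons (by simp),
    List.drop_eq_getElem_cons (by simp [← hab])]
  simp [← hab]
  omega

section TensorOperators

variable {N n : ℕ}

theorem op2_apply (X : End2 N) (a b : Fin n) (f g : Fin n → Fin N) :
    op2 N n X a b f g =
      if ∀ i, i ≠ a → i ≠ b → f i = g i then X (f a, f b) (g a, g b) else 0 := by
  unfold op2
  split_ifs with h
  · rw [Finset.prod_eq_one, mul_one]
    intro i _
    split_ifs with h1 h2
    · rfl
    · exact absurd (h i h1.1 h1.2) h2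
    · rfl
  · push Not at h
    obtain ⟨i, h1, h2, h3⟩ := h
    rw [Finset.prod_eq_zero (Finset.mem_univ i), mul_zero]
    simp [h1, h2, h3]

theorem opBlock_apply {m : ℕ} (e : Fin m → Fin n) (X : EndT N m) (f g : Fin n → Fin N) :
    opBlock N e X f g =
      if ∀ i, (∀ k, e k ≠ i) → f i = g i then X (f ∘ e) (g ∘ e) else 0 := by
  unfold opBlock
  split_ifs with h
  · rw [Finset.prod_eq_one, mul_one]
    intro i _
    split_ifs with h1 h2
    · rfl
    · exact absurd (h i h1) h2
    · rfl
  · push Not at h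
    obtain ⟨i, h1, h2⟩ := h
    rw [Finset.prod_eq_zero (Finset.mem_univ i), mul_zero]
    simp [h1, h2]

theorem opBlock_mul {m : ℕ} {e : Fin m → Fin n} (he : Function.Injective e) (X Y : EndT N m) :
    opBlock N e (X * Y) = opBlock N e X * opBlock N e Y := by
  ext f g
  rw [opBlock_apply, Matrix.mul_apply, Matrix.mul_apply]
  have hoff : ∀ (h : Fin m → Fin N) (i : Fin n), (∀ k, e k ≠ i) →
      Function.extend e h f i = f i := fun h i hi =>
    Function.extend_apply' _ _ _ (by rintro ⟨k, hk⟩; exact hi k hk)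
  have hon : ∀ h : Fin m → Fin N, Function.extend e h f ∘ e = h := fun h =>
    funext fun k => he.extend_apply h f k
  split_ifs with hfg
  · refine Fintype.sum_of_injective (fun h => Function.extend e h f)
      (fun h₁ h₂ h => ?_) _ _ ?_ ?_
    · rw [← hon h₁, ← hon h₂]
      exact congrArg (· ∘ e) h
    · intro h hh
      rw [opBlock_apply, if_neg, zero_mul]
      intro hf
      refine hh ⟨h ∘ e, ?_⟩
      funext i
      by_cases hi : ∃ k, e k = i
      · obtain ⟨k, rfl⟩ := hi
        simp [he.extend_apply]
      · push Not at hi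
        exact (hoff _ i hi).trans (hf i hi)
    · intro h
      rw [opBlock_apply, opBlock_apply, if_pos fun i hi => (hoff h i hi).symm,
        if_pos fun i hi => (hoff h i hi).trans (hfg i hi), hon]
  · refine (Finset.sum_eq_zero fun h _ => ?_).symm
    rw [opBlock_apply, opBlock_apply]
    split_ifs with h1 h2
    · exact absurd (fun i hi => (h1 i hi).trans (h2 i hi)) hfg
    all_goals simp

theorem opBlock_op2 {m : ℕ} {e : Fin m → Fin n} (he : Function.Injective e) (X : End2 N)
    (a b : Fin m) : opBlock N e (op2 N m X a b) = op2 N n X (e a) (e b) := by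
  ext f g
  rw [opBlock_apply, op2_apply, op2_apply, ← ite_and]
  refine if_congr ⟨fun h i ha hb => ?_, fun h => ⟨fun i hi => ?_, fun i ha hb => ?_⟩⟩ rfl rfl
  · by_cases hi : ∃ k, e k = i
    · obtain ⟨k, rfl⟩ := hi
      exact h.2 k (fun h => ha (congrArg e h)) (fun h => hb (congrArg e h))
    · push Not at hi
      exact h.1 i hi
  · exact h i (hi a).symm (hi b).symm
  · exact h (e i) (he.ne ha) (he.ne hb)

theorem op2_mul {a b : Fin n} (hab : a ≠ b) (X Y : End2 N) :
    op2 N n (X * Y) a b = op2 N n X a b * op2 N n Y a b := by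
  have key : ∀ Z : End2 N, op2 N n Z a b =
      opBlock N ![a, b] (Matrix.reindex (finTwoArrowEquiv (Fin N)).symm
        (finTwoArrowEquiv (Fin N)).symm Z) := by
    intro Z
    ext f g
    rw [op2_apply, opBlock_apply]
    refine if_congr (forall_congr' fun i => ?_) ?_ rfl
    · simp [Fin.forall_fin_two, eq_comm]
    · simp
  have he : Function.Injective ![a, b] := by
    intro i j
    fin_cases i <;> fin_cases j <;> simp [hab, hab.symm]
  rw [key, key, key, ← opBlock_mul he]
  simp only [Matrix.reindex_apply, Matrix.submatrix_mul_equiv]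

theorem op2_smul_one (z : ℂ) (a b : Fin n) :
    op2 N n (z • (1 : End2 N)) a b = z • (1 : EndT N n) := by
  ext f g
  rw [op2_apply]
  by_cases h : f = g
  · subst h; simp
  · rw [Matrix.smul_apply z (1 : EndT N n), Matrix.one_apply_ne h, smul_zero]
    split_ifs with h1
    · rw [Matrix.smul_apply, Matrix.one_apply_ne, smul_zero]
      intro h2
      rw [Prod.mk.injEq] at h2
      refine h (funext fun i => ?_)
      by_cases ha : i = a
      · rw [ha, h2.1]
      by_cases hb : i = b
      · rw [hb, h2.2]
      exact h1 i ha hb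
    · rfl

theorem op2_mul_op2_apply_of_disjoint {a b c d : Fin n} (hac : a ≠ c) (had : a ≠ d)
    (hbc : b ≠ c) (hbd : b ≠ d) (X Y : End2 N) (f g : Fin n → Fin N) :
    (op2 N n X a b * op2 N n Y c d) f g =
      if ∀ i, i ≠ a → i ≠ b → i ≠ c → i ≠ d → f i = g i then
        X (f a, f b) (g a, g b) * Y (f c, f d) (g c, g d) else 0 := by
  rw [Matrix.mul_apply,
    Finset.sum_eq_single (fun i => if i = a ∨ i = b then g i else f i)]
  · rw [op2_apply, if_pos (by intro i h1 h2; simp [h1, h2]), op2_apply, mul_ite, mul_zero]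
    refine if_congr (forall_congr' fun i => ?_) ?_ rfl
    · by_cases h1 : i = a <;> by_cases h2 : i = b <;> simp [h1, h2]
    · simp [hac.symm, had.symm, hbc.symm, hbd.symm]
  · intro h _ hh
    rw [op2_apply, op2_apply]
    split_ifs with h1 h2
    · refine absurd (funext fun i => ?_) hh
      split_ifs with hi
      · rcases hi with rfl | rfl
        · exact h2 _ hac had
        · exact h2 _ hbc hbd
      · push Not at hi
        exact (h1 i hi.1 hi.2).symm
    all_goals simp
  · simp

theorem commute_op2_of_disjoint {a b c d : Fin n} (hac : a ≠ c) (had : a ≠ d)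
    (hbc : b ≠ c) (hbd : b ≠ d) (X Y : End2 N) :
    Commute (op2 N n X a b) (op2 N n Y c d) := by
  ext f g
  rw [op2_mul_op2_apply_of_disjoint hac had hbc hbd,
    op2_mul_op2_apply_of_disjoint hac.symm hbc.symm had.symm hbd.symm]
  exact if_congr ⟨fun h i h1 h2 h3 h4 => h i h3 h4 h1 h2,
    fun h i h1 h2 h3 h4 => h i h3 h4 h1 h2⟩ (mul_comm _ _) rfl

theorem permMat_mul_apply (π : Equiv.Perm (Fin n)) (X : EndT N n) (f g : Fin n → Fin N) :
    (permMat N n π * X) f g = X (f ∘ π.symm) g := by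
  rw [Matrix.mul_apply, Finset.sum_eq_single (f ∘ π.symm)]
  · simp [permMat, Function.comp_assoc]
  · intro h _ hh
    rw [permMat, if_neg, zero_mul]
    rintro rfl
    simp [Function.comp_assoc] at hh
  · simp

theorem mul_permMat_apply (π : Equiv.Perm (Fin n)) (X : EndT N n) (f g : Fin n → Fin N) :
    (X * permMat N n π) f g = X f (g ∘ π) := by
  rw [Matrix.mul_apply, Finset.sum_eq_single (g ∘ π)]
  · simp [permMat]
  · intro h _ hh
    rw [permMat, if_neg hh, mul_zero]
  · simp

theorem semiconjBy_permMat_op2 (π : Equiv.Perm (Fin n)) (X : End2 N) (a b : Fin n) :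
    SemiconjBy (permMat N n π) (op2 N n X (π a) (π b)) (op2 N n X a b) := by
  ext f g
  rw [permMat_mul_apply, mul_permMat_apply, op2_apply, op2_apply]
  refine if_congr ⟨fun h i h1 h2 => ?_, fun h i h1 h2 => ?_⟩ (by simp) rfl
  · simpa using h (π i) (by simpa using h1) (by simpa using h2)
  · simpa using h (π.symm i) (by simpa [Equiv.symm_apply_eq] using h1)
      (by simpa [Equiv.symm_apply_eq] using h2)

theorem op2_flipMat {a b : Fin n} :
    op2 N n (flipMat N) a b = permMat N n (Equiv.swap a b) := by
  ext f g
  rw [op2_apply, permMat, flipMat, ← ite_and]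
  refine if_congr ⟨fun h => funext fun i => ?_, ?_⟩ rfl rfl
  · by_cases ha : i = a
    · subst ha; simpa using h.2.1
    by_cases hb : i = b
    · subst hb; simpa using h.2.2
    simpa [Equiv.swap_apply_of_ne_of_ne ha hb] using h.1 i ha hb
  · rintro rfl
    exact ⟨fun i ha hb => by simp [Equiv.swap_apply_of_ne_of_ne ha hb], by simp, by simp⟩

theorem permMat_swap_mul_self (a b : Fin n) :
    permMat N n (Equiv.swap a b) * permMat N n (Equiv.swap a b) = 1 := by
  ext f g
  rw [permMat_mul_apply, permMat, Matrix.one_apply]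
  refine if_congr ⟨fun h => ?_, fun h => by simp [h]⟩ rfl rfl
  funext i
  simpa using congrFun h (Equiv.swap a b i)

theorem op2_flipMat_conj {a b : Fin n} (hab : a ≠ b) (X : End2 N) :
    op2 N n (flipMat N * X * flipMat N) a b = op2 N n X b a := by
  have h := semiconjBy_permMat_op2 (Equiv.swap a b) X b a
  rw [Equiv.swap_apply_left, Equiv.swap_apply_right] at h
  rw [op2_mul hab, op2_mul hab, op2_flipMat, h.eq, mul_assoc, permMat_swap_mul_self, mul_one]

theorem YangBaxter.op2_eq {R : ℂ → End2 N} (hR : YangBaxter N R) {a b j : Fin n}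
    (hab : a ≠ b) (haj : a ≠ j) (hbj : b ≠ j) {x y z : ℂ} (hxyz : x + y = z) :
    op2 N n (R x) a b * op2 N n (R z) a j * op2 N n (R y) b j =
      op2 N n (R y) b j * op2 N n (R z) a j * op2 N n (R x) a b := by
  have he : Function.Injective ![a, b, j] := by
    intro p q
    fin_cases p <;> fin_cases q <;> simp [hab, haj, hbj, hab.symm, haj.symm, hbj.symm]
  subst hxyz
  have h := congrArg (opBlock N ![a, b, j]) (hR x y)
  simpa [opBlock_mul he, opBlock_op2 he] using h

/-- The factor of `Fop N R c` indexed by the pairs with first entry `i`. -/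
def Frow (N : ℕ) (R : ℂ → End2 N) {n : ℕ} (c : Fin n → ℂ) (i : Fin n) : EndT N n :=
  (((List.finRange n).filter fun j => decide (i < j)).map fun j =>
    op2 N n (R (c i - c j)) i j).prod

theorem Fop_eq_prod_Frow (R : ℂ → End2 N) (c : Fin n → ℂ) :
    Fop N R c = ((List.finRange n).map (Frow N R c)).prod := by
  unfold Fop lexPairs
  rw [List.map_flatMap, List.flatMap_def, List.prod_flatten, List.map_map]
  congr 2
  funext i
  simp [Frow, Function.comp_def]

/-- For adjacent `a`, `b`, the operator `R_{a,b}(c_b - c_a) P_{a,b}` intertwines `F(c)` and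
`F(c ∘ (a b))`; this needs only the Yang-Baxter equation. -/
theorem op2_swap_mul_Fop {R : ℂ → End2 N} (hR : YangBaxter N R) (c : Fin n → ℂ)
    {a b : Fin n} (hsucc : (b : ℕ) = a + 1) :
    op2 N n (R (c b - c a)) a b * permMat N n (Equiv.swap a b) * Fop N R c =
      Fop N R (c ∘ Equiv.swap a b) *
        (permMat N n (Equiv.swap a b) * op2 N n (R (c a - c b)) a b) := by
  obtain ⟨L₁, L₂, hL⟩ := List.exists_finRange_eq_append hsucc
  have hsort := List.pairwise_lt_finRange n
  rw [hL, List.pairwise_append, List.pairwise_cons, List.pairwise_cons] at hsort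
  obtain ⟨-, ⟨ha2, hb2, h2⟩, h1⟩ := hsort
  have h1a : ∀ i ∈ L₁, i < a := fun i hi => h1 i hi a (by simp)
  have hablt : a < b := ha2 b (by simp)
  have hab : a ≠ b := hablt.ne
  have hbL : ∀ i ∈ L₂, b < i := hb2
  have haL : ∀ i ∈ L₂, a < i := fun i hi => hablt.trans (hb2 i hi)
  have hpass : ∀ i, i ≠ a → i ≠ b → (c ∘ Equiv.swap a b) i = c i := fun i h h' => by
    simp [Equiv.swap_apply_of_ne_of_ne h h']
  set P := permMat N n (Equiv.swap a b)
  have hPab : ∀ (X : End2 N) (i j : Fin n), SemiconjBy P (op2 N n X i j)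
      (op2 N n X (Equiv.swap a b i) (Equiv.swap a b j)) := fun X i j => by
    simpa using semiconjBy_permMat_op2 (Equiv.swap a b) X (Equiv.swap a b i) (Equiv.swap a b j)
  have hPoff : ∀ (X : End2 N) (i j : Fin n), i ≠ a → i ≠ b → j ≠ a → j ≠ b →
      Commute P (op2 N n X i j) := fun X i j h1 h2 h3 h4 => by
    have h := hPab X i j
    rwa [Equiv.swap_apply_of_ne_of_ne h1 h2, Equiv.swap_apply_of_ne_of_ne h3 h4] at h
  set A := op2 N n (R (c b - c a)) a b * P with hA
  set B := P * op2 N n (R (c a - c b)) a b with hB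
  have hAoff : ∀ (X : End2 N) (i j : Fin n), i ≠ a → i ≠ b → j ≠ a → j ≠ b →
      Commute A (op2 N n X i j) := fun X i j h1 h2 h3 h4 =>
    (commute_op2_of_disjoint h1.symm h3.symm h2.symm h4.symm _ _).mul_left (hPoff X i j h1 h2 h3 h4)
  have hBoff : ∀ (X : End2 N) (i j : Fin n), i ≠ a → i ≠ b → j ≠ a → j ≠ b →
      Commute B (op2 N n X i j) := fun X i j h1 h2 h3 h4 =>
    (hPoff X i j h1 h2 h3 h4).mul_left (commute_op2_of_disjoint h1.symm h3.symm h2.symm h4.symm _ _)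
  have hlow : ∀ i ∈ L₁, SemiconjBy A (Frow N R c i) (Frow N R (c ∘ Equiv.swap a b) i) := by
    intro i hi
    have hia := h1a i hi
    have hib := hia.trans hablt
    unfold Frow
    rw [hL]
    simp only [List.filter_append, List.filter_cons, hia, hib, decide_true, if_true,
      List.map_append, List.map_cons, List.prod_append, List.prod_cons]
    refine SemiconjBy.mul_right (SemiconjBy.list_prod_map fun j hj => ?_) ?_
    · have hj' := h1a j (List.mem_of_mem_filter hj)
      rw [hpass i hia.ne hib.ne, hpass j hj'.ne (hj'.trans hablt).ne]
      exact hAoff _ i j hia.ne hib.ne hj'.ne (hj'.trans hablt).ne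
    · rw [← mul_assoc, ← mul_assoc]
      refine SemiconjBy.mul_right ?_ (SemiconjBy.list_prod_map fun j hj => ?_)
      · have hx := ((hPab (R (c i - c a)) i a).mul_right (hPab (R (c i - c b)) i b)).eq
        have hy := hR.op2_eq hia.ne hib.ne hab
          (x := c i - c b) (y := c b - c a) (z := c i - c a) (by ring)
        rw [Equiv.swap_apply_left, Equiv.swap_apply_right,
          Equiv.swap_apply_of_ne_of_ne hia.ne hib.ne] at hx
        rw [hpass i hia.ne hib.ne, Function.comp_apply, Function.comp_apply,
          Equiv.swap_apply_left, Equiv.swap_apply_right, SemiconjBy, hA, mul_assoc, hx,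
          ← mul_assoc, ← mul_assoc, ← mul_assoc, hy]
      · have hj' := List.mem_of_mem_filter hj
        have hja := (haL j hj').ne'
        have hjb := (hbL j hj').ne'
        rw [hpass i hia.ne hib.ne, hpass j hja hjb]
        exact hAoff _ i j hia.ne hib.ne hja hjb
  have hhigh : ∀ i ∈ L₂, SemiconjBy B (Frow N R c i) (Frow N R (c ∘ Equiv.swap a b) i) := by
    intro i hi
    refine SemiconjBy.list_prod_map fun j hj => ?_
    have hij : i < j := by simpa using hj
    have hia := (haL i hi)
    have hib := (hbL i hi)
    rw [hpass i hia.ne' hib.ne', hpass j (hia.trans hij).ne' (hib.trans hij).ne']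
    exact hBoff _ i j hia.ne' hib.ne' (hia.trans hij).ne' (hib.trans hij).ne'
  have hfL₂ : ∀ i, (∀ x ∈ L₂, i < x) → L₂.filter (fun j => decide (i < j)) = L₂ := by
    intro i h
    simpa using h
  have hfL : ∀ i, (∀ x ∈ L₁, ¬ i < x) → L₁.filter (fun j => decide (i < j)) = [] := by
    intro i h
    simpa using h
  have hrow_a : ∀ d : Fin n → ℂ, Frow N R d a = op2 N n (R (d a - d b)) a b *
      (L₂.map fun j => op2 N n (R (d a - d j)) a j).prod := by
    intro d
    unfold Frow
    rw [hL, List.filter_append, hfL a fun x hx => (h1a x hx).not_gt]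
    simp [hablt, hfL₂ a haL]
  have hrow_b : ∀ d : Fin n → ℂ, Frow N R d b =
      (L₂.map fun j => op2 N n (R (d b - d j)) b j).prod := by
    intro d
    unfold Frow
    rw [hL, List.filter_append, hfL b fun x hx => ((h1a x hx).trans hablt).not_gt]
    simp [hablt.not_gt, hfL₂ b hbL]
  have hrows : ∀ d : Fin n → ℂ, Frow N R d a * Frow N R d b = op2 N n (R (d a - d b)) a b *
      (L₂.map fun j => op2 N n (R (d a - d j)) a j * op2 N n (R (d b - d j)) b j).prod := by
    intro d
    rw [hrow_a, hrow_b, mul_assoc, List.prod_map_mul_prod_map_of_pairwise_commute]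
    refine (List.pairwise_and_iff.2 ⟨h2, List.pairwise_of_forall_mem_list
      (r := fun i j => i ∈ L₂ ∧ j ∈ L₂) fun i hi j hj => ⟨hi, hj⟩⟩).imp ?_
    rintro i j ⟨hij, hi, hj⟩
    exact commute_op2_of_disjoint hab.symm (hbL j hj).ne (haL i hi).ne' hij.ne _ _
  have hmid : A * (Frow N R c a * Frow N R c b) =
      Frow N R (c ∘ Equiv.swap a b) a * Frow N R (c ∘ Equiv.swap a b) b * B := by
    rw [hrows, hrows, hA, mul_assoc, ← mul_assoc P, ← hB]
    simp only [Function.comp_apply, Equiv.swap_apply_left, Equiv.swap_apply_right]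
    rw [mul_assoc (op2 _ _ _ _ _)]
    refine congrArg (op2 N n (R (c b - c a)) a b * ·) (SemiconjBy.list_prod_map fun j hj => ?_)
    have hja := (haL j hj).ne'
    have hjb := (hbL j hj).ne'
    have hx := ((hPab (R (c b - c j)) b j).mul_right (hPab (R (c a - c j)) a j)).eq
    have hy := hR.op2_eq hab hja.symm hjb.symm
      (x := c a - c b) (y := c b - c j) (z := c a - c j) (by ring)
    rw [Equiv.swap_apply_left, Equiv.swap_apply_right,
      Equiv.swap_apply_of_ne_of_ne hja hjb] at hx
    rw [Equiv.swap_apply_of_ne_of_ne hja hjb, SemiconjBy, hB, mul_assoc, ← mul_assoc (op2 _ _ _ _ _),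
      hy, ← mul_assoc, hx, mul_assoc]
  rw [Fop_eq_prod_Frow, Fop_eq_prod_Frow, hL]
  simp only [List.map_append, List.map_cons, List.prod_append, List.prod_cons]
  have hlow' := (SemiconjBy.list_prod_map hlow).eq
  have hhigh' := (SemiconjBy.list_prod_map hhigh).eq
  calc
    _ = A * (L₁.map (Frow N R c)).prod * ((Frow N R c a * Frow N R c b) *
        (L₂.map (Frow N R c)).prod) := by simp only [mul_assoc]
    _ = (L₁.map (Frow N R (c ∘ Equiv.swap a b))).prod * (A * (Frow N R c a * Frow N R c b)) *
        (L₂.map (Frow N R c)).prod := by rw [hlow']; simp only [mul_assoc]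
    _ = (L₁.map (Frow N R (c ∘ Equiv.swap a b))).prod *
        (Frow N R (c ∘ Equiv.swap a b) a * Frow N R (c ∘ Equiv.swap a b) b) *
        (B * (L₂.map (Frow N R c)).prod) := by rw [hmid]; simp only [mul_assoc]
    _ = _ := by rw [hhigh']; simp only [mul_assoc]

end TensorOperators

/-- Under the unitarity condition `R(u) · P R(−u) P = γ(u) Id`, if
`s_k` is admissible (`γ(c_k − c_{k+1}) ≠ 0`) and `{F(c)e_1, …, F(c)e_l}` is a basis of
`W_c = Im F(c)`, then `{A_k F(c)e_1, …, A_k F(c)e_l}` is a basis of `W_{c^{(s_k)}}`,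
where `A_k := P_{k,k+1} R_{k+1,k}(c_{k+1}−c_k)`; in particular the two subspaces have
the same dimension. -/
theorem basis_image_under_admissible_swap
    (N : ℕ) (R : ℂ → End2 N) (hR : YangBaxter N R)
    (γ : ℂ → ℂ)
    (hU : ∀ u : ℂ, R u * (flipMat N * R (-u) * flipMat N) = γ u • (1 : End2 N))
    (n : ℕ) (hn : 2 ≤ n) (c : Fin n → ℂ)
    (k : ℕ) (hk : k + 1 < n)
    (hγ : γ (c ⟨k, by omega⟩ - c ⟨k + 1, hk⟩) ≠ 0)
    (l : ℕ) (e : Fin l → ((Fin n → Fin N) → ℂ))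
    (hind : LinearIndependent ℂ fun i => (Fop N R c).mulVec (e i))
    (hspan : Submodule.span ℂ (Set.range fun i => (Fop N R c).mulVec (e i)) =
      LinearMap.range (Matrix.mulVecLin (Fop N R c))) :
    (LinearIndependent ℂ fun i =>
      (op2 N n (flipMat N) ⟨k, by omega⟩ ⟨k + 1, hk⟩ *
        op2 N n (R (c ⟨k + 1, hk⟩ - c ⟨k, by omega⟩)) ⟨k + 1, hk⟩ ⟨k, by omega⟩).mulVec
        ((Fop N R c).mulVec (e i))) ∧
    Submodule.span ℂ (Set.range fun i =>
      (op2 N n (flipMat N) ⟨k, by omega⟩ ⟨k + 1, hk⟩ *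
        op2 N n (R (c ⟨k + 1, hk⟩ - c ⟨k, by omega⟩)) ⟨k + 1, hk⟩ ⟨k, by omega⟩).mulVec
        ((Fop N R c).mulVec (e i))) =
      LinearMap.range (Matrix.mulVecLin
        (Fop N R (c ∘ Equiv.swap ⟨k, by omega⟩ ⟨k + 1, hk⟩))) ∧
    Module.finrank ℂ ↥(LinearMap.range (Matrix.mulVecLin (Fop N R c))) =
      Module.finrank ℂ ↥(LinearMap.range (Matrix.mulVecLin
        (Fop N R (c ∘ Equiv.swap ⟨k, by omega⟩ ⟨k + 1, hk⟩)))) := by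
  set a : Fin n := ⟨k, _⟩ with ha
  set b : Fin n := ⟨k + 1, hk⟩ with hb
  have hab : a ≠ b := by simp [ha, hb]
  set F := Fop N R c
  set F' := Fop N R (c ∘ Equiv.swap a b)
  have hPu : IsUnit (permMat N n (Equiv.swap a b)) :=
    IsUnit.of_mul_eq_one _ (permMat_swap_mul_self a b)
  have hunit : op2 N n (R (c a - c b)) a b * op2 N n (R (c b - c a)) b a =
      γ (c a - c b) • (1 : EndT N n) := by
    rw [← op2_flipMat_conj hab, ← op2_mul hab, ← neg_sub (c a), hU, op2_smul_one]
  have hRu : IsUnit (op2 N n (R (c a - c b)) a b) := by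
    refine IsUnit.of_mul_eq_one ((γ (c a - c b))⁻¹ • op2 N n (R (c b - c a)) b a) ?_
    rw [mul_smul_comm, hunit, smul_smul, inv_mul_cancel₀ hγ, one_smul]
  have hRu' : IsUnit (op2 N n (R (c b - c a)) b a) := by
    refine IsUnit.of_mul_eq_one_right ((γ (c a - c b))⁻¹ • op2 N n (R (c a - c b)) a b) ?_
    rw [smul_mul_assoc, hunit, smul_smul, inv_mul_cancel₀ hγ, one_smul]
  rw [op2_flipMat]
  set A := permMat N n (Equiv.swap a b) * op2 N n (R (c b - c a)) b a with hA
  set B := permMat N n (Equiv.swap a b) * op2 N n (R (c a - c b)) a b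
  have hAF : A * F = F' * B := by
    have h := semiconjBy_permMat_op2 (Equiv.swap a b) (R (c b - c a)) a b
    rw [Equiv.swap_apply_left, Equiv.swap_apply_right] at h
    rw [hA, h.eq]
    exact op2_swap_mul_Fop hR c rfl
  have hAinj : Function.Injective A.mulVecLin := Matrix.mulVec_injective_of_isUnit (hPu.mul hRu')
  have hBsurj : Function.Surjective B.mulVecLin :=
    Matrix.mulVec_surjective_iff_isUnit.2 (hPu.mul hRu)
  have hind' : LinearIndependent ℂ fun i => A.mulVec (F.mulVec (e i)) :=
    hind.map' A.mulVecLin (LinearMap.ker_eq_bot.2 hAinj)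
  have hspan' : Submodule.span ℂ (Set.range fun i => A.mulVec (F.mulVec (e i))) =
      LinearMap.range F'.mulVecLin := by
    have hrange : (Set.range fun i => A.mulVec (F.mulVec (e i))) =
        A.mulVecLin '' Set.range fun i => F.mulVec (e i) := by
      rw [← Set.range_comp]; rfl
    rw [hrange, Submodule.span_image, hspan, ← LinearMap.range_comp, ← Matrix.mulVecLin_mul, hAF,
      Matrix.mulVecLin_mul, LinearMap.range_comp_of_range_eq_top _ (LinearMap.range_eq_top.2 hBsurj)]
  refine ⟨hind', hspan', ?_⟩
  rw [← hspan, ← hspan', finrank_span_eq_card hind, finrank_span_eq_card hind']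
end

section
/- Let c_2, c_3 ∈ ℂ with c_2 ≠ 0, c_3 ≠ 0 and c_2 ≠ c_3, and set Φ(0,c_2,c_3) := (1 + (1,2)/c_2)(1 + (1,3)/c_3)(1 − (2,3)/(c_2−c_3)) ∈ ℂS_3. Then there exists x ∈ ℂ with Φ(0,c_2,c_3)² = x · Φ(0,c_2,c_3) (i.e., Φ(0,c_2,c_3) is proportional to an idempotent of ℂS_3) if and only if (c_2,c_3) ∈ {(1,2), (1,−1), (−1,1), (−1,−2), (2,1), (−2,−1)}. -/
noncomputable section

/-- The evaluated fusion function
`Φ(0,c₂,c₃) = (1 + (1,2)/c₂)(1 + (1,3)/c₃)(1 − (2,3)/(c₂−c₃)) ∈ ℂS₃`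
(the letters `1, 2, 3` are modelled by `0, 1, 2 : Fin 3`). -/
def PhiEval (c₂ c₃ : ℂ) : MonoidAlgebra ℂ (Equiv.Perm (Fin 3)) :=
  (1 + c₂⁻¹ • MonoidAlgebra.of ℂ (Equiv.Perm (Fin 3)) (Equiv.swap 0 1)) *
    (1 + c₃⁻¹ • MonoidAlgebra.of ℂ (Equiv.Perm (Fin 3)) (Equiv.swap 0 2)) *
    (1 - (c₂ - c₃)⁻¹ • MonoidAlgebra.of ℂ (Equiv.Perm (Fin 3)) (Equiv.swap 1 2))

open Equiv in
/-- The element `1 + p (1,2) + q (1,3) + r (2,3) + m ((1,2)(1,3) + (1,3)(1,2))` of `ℂS₃`. -/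
def symComb (p q r m : ℂ) : MonoidAlgebra ℂ (Perm (Fin 3)) :=
  .single 1 1 + .single (swap 0 1) p + .single (swap 0 2) q + .single (swap 1 2) r +
    .single (swap 0 1 * swap 0 2) m + .single (swap 0 2 * swap 0 1) m

open Equiv in
theorem perm_fin_three_cases (σ : Perm (Fin 3)) :
    σ = 1 ∨ σ = swap 0 1 ∨ σ = swap 0 2 ∨ σ = swap 1 2 ∨
      σ = swap 0 1 * swap 0 2 ∨ σ = swap 0 2 * swap 0 1 := by
  revert σ
  decide

theorem phiEval_eq_symComb {c₂ c₃ : ℂ} (h₂ : c₂ ≠ 0) (h₃ : c₃ ≠ 0) (h₂₃ : c₂ ≠ c₃) :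
    PhiEval c₂ c₃ = symComb c₂⁻¹ (c₃⁻¹ * (1 - c₂⁻¹ * (c₂ - c₃)⁻¹)) (-(c₂ - c₃)⁻¹)
      (-(c₂⁻¹ * (c₂ - c₃)⁻¹)) := by
  have h : c₂ - c₃ ≠ 0 := sub_ne_zero.mpr h₂₃
  ext σ
  rcases perm_fin_three_cases σ with rfl | rfl | rfl | rfl | rfl | rfl <;>
  simp +decide [PhiEval, symComb, MonoidAlgebra.one_def, mul_assoc, add_mul, mul_sub,
    Finsupp.single_apply] <;>
  field_simp <;> ring

theorem symComb_mul_self_eq_smul_iff (p q r m x : ℂ) :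
    symComb p q r m * symComb p q r m = x • symComb p q r m ↔
      1 + p ^ 2 + q ^ 2 + r ^ 2 + 2 * m ^ 2 = x ∧
      2 * p + 2 * m * (q + r) = x * p ∧
      2 * q + 2 * m * (p + r) = x * q ∧
      2 * r + 2 * m * (p + q) = x * r ∧
      2 * m + m ^ 2 + (p * q + q * r + r * p) = x * m := by
  constructor
  · intro h
    have key σ := congrArg (fun f ↦ f.coeff σ) h
    have h₁ := key 1
    have h₂ := key (Equiv.swap 0 1)
    have h₃ := key (Equiv.swap 0 2)
    have h₄ := key (Equiv.swap 1 2)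
    have h₅ := key (Equiv.swap 0 1 * Equiv.swap 0 2)
    simp +decide [symComb, mul_assoc, add_mul, Finsupp.single_apply] at h₁ h₂ h₃ h₄ h₅
    refine ⟨?_, ?_, ?_, ?_, ?_⟩ <;> grind
  · rintro ⟨h₁, h₂, h₃, h₄, h₅⟩
    ext σ
    rcases perm_fin_three_cases σ with rfl | rfl | rfl | rfl | rfl | rfl <;>
    simp +decide [symComb, mul_assoc, add_mul, Finsupp.single_apply] <;> grind

/-- For `c₂, c₃ ≠ 0` and `c₂ ≠ c₃`, the element `Φ(0,c₂,c₃)` of `ℂS₃`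
is proportional to an idempotent (i.e. `Φ² = xΦ` for some `x ∈ ℂ`) if and only if
`(c₂,c₃) ∈ {(1,2), (1,−1), (−1,1), (−1,−2), (2,1), (−2,−1)}`. -/
theorem phi_proportional_idempotent_iff
    (c₂ c₃ : ℂ) (h₂ : c₂ ≠ 0) (h₃ : c₃ ≠ 0) (h₂₃ : c₂ ≠ c₃) :
    (∃ x : ℂ, PhiEval c₂ c₃ * PhiEval c₂ c₃ = x • PhiEval c₂ c₃) ↔
      (c₂, c₃) ∈ ({(1, 2), (1, -1), (-1, 1), (-1, -2), (2, 1), (-2, -1)} : Set (ℂ × ℂ)) := by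
  simp only [phiEval_eq_symComb h₂ h₃ h₂₃, symComb_mul_self_eq_smul_iff, Set.mem_insert_iff,
    Set.mem_singleton_iff, Prod.mk.injEq]
  constructor
  · rintro ⟨x, -, e₂, e₃, e₄, e₅⟩
    have h : c₂ - c₃ ≠ 0 := sub_ne_zero.mpr h₂₃
    set p := c₂⁻¹
    set b := c₃⁻¹
    set d := (c₂ - c₃)⁻¹
    have hp' : c₂ * p = 1 := mul_inv_cancel₀ h₂
    have hb' : c₃ * b = 1 := mul_inv_cancel₀ h₃
    have hd' : (c₂ - c₃) * d = 1 := mul_inv_cancel₀ h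
    have hpd : d - p = c₃ * (p * d) := by linear_combination d * hp' * (-1) + p * hd'
    have hp₀ : p ≠ 0 := inv_ne_zero h₂
    have hd₀ : d ≠ 0 := inv_ne_zero h
    by_cases hx : x = 2 + 2 * (p * d)
    · have hm : p * d ≠ 0 := mul_ne_zero hp₀ hd₀
      have hq : b * (1 - p * d) = d - p := by
        refine mul_left_cancel₀ hm ?_
        subst hx
        linear_combination -(1 / 2) * e₂
      have hq₂ : (d - p) ^ 2 = p * d * (1 - p * d) := by
        linear_combination -(d - p) * hq + b * (1 - p * d) * hpd + p * d * (1 - p * d) * hb'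
      have hm' : p * d = 1 / 2 := by
        refine mul_left_cancel₀ hm ?_
        rw [hq] at e₅
        subst hx
        linear_combination (1 / 4) * e₅ + (1 / 4) * hq₂
      have hc₃ : c₃ ^ 2 = 1 ^ 2 := by
        rw [hpd, hm'] at hq₂
        linear_combination 4 * hq₂
      have hc₂ : c₂ * (c₂ - c₃) = 2 := by
        linear_combination 2 * (c₂ - c₃) * d * hp' + 2 * hd' - 2 * c₂ * (c₂ - c₃) * hm'
      rcases eq_or_eq_neg_of_sq_eq_sq _ _ hc₃ with h₁ | h₁
      · have : (c₂ - 2) * (c₂ + 1) = 0 := by linear_combination hc₂ + c₂ * h₁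
        grind
      · have : (c₂ + 2) * (c₂ - 1) = 0 := by linear_combination hc₂ + c₂ * h₁
        grind
    · have hx' : 2 + 2 * (p * d) - x ≠ 0 := sub_ne_zero.mpr (Ne.symm hx)
      have hdp : d = -p := by
        refine mul_left_cancel₀ hx' ?_
        linear_combination e₂ - e₄
      have hq : b * (1 - p * d) = p := by
        refine mul_left_cancel₀ hx' ?_
        linear_combination e₃ - e₂
      have hc : c₃ = 2 * c₂ := by
        rw [hdp] at hd'
        linear_combination c₂ * hd' + (c₂ - c₃) * hp'
      have hc₂ : c₂ ^ 2 = 1 ^ 2 := by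
        rw [hdp] at hq
        have hpb : p = 2 * b := by
          rw [hc] at hb'
          refine mul_left_cancel₀ h₂ ?_
          linear_combination hp' - hb'
        have hp₂ : p ^ 2 = 1 := by
          refine mul_left_cancel₀ hp₀ ?_
          linear_combination 2 * hq + (1 + p ^ 2) * hpb
        linear_combination (c₂ * p + 1) * hp' - c₂ ^ 2 * hp₂
      rcases eq_or_eq_neg_of_sq_eq_sq _ _ hc₂ with h₁ | h₁ <;> grind
  · rintro (⟨rfl, rfl⟩ | ⟨rfl, rfl⟩ | ⟨rfl, rfl⟩ | ⟨rfl, rfl⟩ | ⟨rfl, rfl⟩ | ⟨rfl, rfl⟩) <;>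
    exact ⟨_, rfl, by norm_num⟩

end
end

section
/- Let V be a complex vector space of finite dimension N, let λ be a partition of n with ℓ(λ) ≤ N, and let T be a standard Young tableau of shape λ whose classical contents cc(T|1), …, cc(T|n) are pairwise distinct. Define F(T) := ∏_{1≤i<j≤n}^{→} ( Id_{V^{⊗n}} − P_{i,j}/(cc(T|i)−cc(T|j)) ) ∈ End(V^{⊗n}), the product over pairs i < j in lexicographic order. Then the image W_T of F(T) is a nonzero subspace of V^{⊗n} that is invariant under the diagonal action of the Lie algebra gl(V) = End(V) (in which X ∈ gl(V) acts as Σ_{i=1}^{n} Id^{⊗(i−1)} ⊗ X ⊗ Id^{⊗(n−i)}), and W_T is an irreducible gl(V)-module. Moreover, if T' is another standard Young tableau of the same shape λ with pairwise distinct contents, then W_T and W_{T'} are isomorphic as gl(V)-modules. -/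
/-!
We model the complex vector space `V` of dimension `N` as `ℂ^N` (i.e. `Fin N → ℂ`), so that
`V^{⊗ n}` is `(Fin n → Fin N) → ℂ`, endomorphisms of `V^{⊗ n}` are matrices indexed by
multi-indices, and the Lie algebra `gl(V) = End(V)` is `Matrix (Fin N) (Fin N) ℂ`.

A standard Young tableau with `n` entries is modelled by the (injective) map
`T : Fin n → ℕ × ℕ` sending an entry (`0`-based) to the node containing it (`0`-based
`(row, column)` coordinates); its shape is `Set.range T`.
-/

open scoped BigOperators

noncomputable section

/-- The flip operator `P_{a,b}` on `V^{⊗ n}`, exchanging the tensor factors `a` and `b`. -/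
def flipOp (N n : ℕ) (a b : Fin n) : EndT N n :=
  fun f g => (if f a = g b ∧ f b = g a then (1 : ℂ) else 0) *
    ∏ i : Fin n, if i ≠ a ∧ i ≠ b then (if f i = g i then (1 : ℂ) else 0) else 1

/-- `T : Fin n → ℕ × ℕ` is a standard Young tableau: the set of its nodes is a Young
diagram (it is closed under decreasing either coordinate), and entries increase along
rows and down columns (equivalently, if the node of `i` is weakly north-west of the
node of `j` then `i ≤ j`; this also forces `T` to be injective). -/
def IsStandardTableau (n : ℕ) (T : Fin n → ℕ × ℕ) : Prop :=
  (∀ p ∈ Set.range T, ∀ q : ℕ × ℕ, q.1 ≤ p.1 → q.2 ≤ p.2 → q ∈ Set.range T) ∧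
  ∀ i j : Fin n, (T i).1 ≤ (T j).1 → (T i).2 ≤ (T j).2 → i ≤ j

/-- The classical content `cc(T|i) = y − x` of the node `(x,y)` of `T` containing `i`,
as a complex number. -/
def content {n : ℕ} (T : Fin n → ℕ × ℕ) (i : Fin n) : ℂ :=
  ((T i).2 : ℂ) - ((T i).1 : ℂ)

/-- `F(T) := ∏→_{1 ≤ i < j ≤ n} ( Id − P_{i,j}/(cc(T|i) − cc(T|j)) )`, product over the
pairs `i < j` in lexicographic order. -/
def FT (N : ℕ) {n : ℕ} (T : Fin n → ℕ × ℕ) : EndT N n :=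
  ((lexPairs n).map fun p =>
    (1 : EndT N n) - (content T p.1 - content T p.2)⁻¹ • flipOp N n p.1 p.2).prod

/-- The diagonal action of `X ∈ gl(V) = End(V)` on `V^{⊗ n}`:
`X ↦ Σ_{a=1}^{n} Id^{⊗(a−1)} ⊗ X ⊗ Id^{⊗(n−a)}`. -/
def glAct (N n : ℕ) (X : Matrix (Fin N) (Fin N) ℂ) : EndT N n :=
  ∑ a : Fin n, fun f g =>
    X (f a) (g a) * ∏ i : Fin n, if i ≠ a then (if f i = g i then (1 : ℂ) else 0) else 1

section Fusion

open Equiv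

variable {ι E : Type*} [DecidableEq ι] [Ring E] [Algebra ℂ E]

/-- The Yang–Baxter factor `1 - P_{a,b} / (c_a - c_b)`. -/
def ybFactor (P : Perm ι →* E) (c : ι → ℂ) (a b : ι) : E :=
  1 - (c a - c b)⁻¹ • P (swap a b)

/-- The ordered product of the factors `ybFactor P c a b` for `b` in a list. -/
def ybRow (P : Perm ι →* E) (c : ι → ℂ) (a : ι) (L : List ι) : E :=
  (L.map (ybFactor P c a)).prod

/-- The ordered product of the factors `ybFactor P c a b` over the pairs `(a, b)` with `a`
before `b` in a list, in lexicographic order. -/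
def fusionProd (P : Perm ι →* E) (c : ι → ℂ) : List ι → E
  | [] => 1
  | a :: L => ybRow P c a L * fusionProd P c L

variable {P : Perm ι →* E} {c : ι → ℂ}

@[simp] lemma ybRow_nil (a : ι) : ybRow P c a [] = 1 := rfl

@[simp] lemma ybRow_cons (a b : ι) (L : List ι) :
    ybRow P c a (b :: L) = ybFactor P c a b * ybRow P c a L := by
  simp [ybRow]

lemma ybRow_append (a : ι) (L M : List ι) :
    ybRow P c a (L ++ M) = ybRow P c a L * ybRow P c a M := by
  simp [ybRow]

omit [Algebra ℂ E] in
lemma map_swap_mul_map_swap {a b d : ι} (hab : a ≠ b) (had : a ≠ d) (hbd : b ≠ d) :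
    P (swap a b) * P (swap a d) = P (swap a d) * P (swap b d) ∧
    P (swap a b) * P (swap a d) = P (swap b d) * P (swap a b) ∧
    P (swap a b) * P (swap b d) = P (swap a d) * P (swap a b) ∧
    P (swap a b) * P (swap b d) = P (swap b d) * P (swap a d) := by
  simp only [← map_mul]
  refine ⟨congrArg P ?_, congrArg P ?_, congrArg P ?_, congrArg P ?_⟩ <;>
  · ext x
    simp only [Perm.mul_apply, swap_apply_def]
    grind

omit [Algebra ℂ E] in
lemma map_swap_mul_self (a b : ι) : P (swap a b) * P (swap a b) = 1 := by
  rw [← map_mul, swap_mul_self, map_one]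

lemma one_sub_smul_mul_three (u v w : ℂ) (p q r : E) :
    (1 - u • p) * (1 - v • q) * (1 - w • r) =
      1 - u • p - v • q - w • r + (u * v) • (p * q) + (u * w) • (p * r) + (v * w) • (q * r)
        - (u * v * w) • (p * q * r) := by
  simp only [sub_mul, mul_sub, one_mul, mul_one, smul_mul_assoc, mul_smul_comm, smul_sub]
  module

lemma yang_baxter (hc : Function.Injective c) {a b d : ι} (hab : a ≠ b) (had : a ≠ d)
    (hbd : b ≠ d) :
    ybFactor P c a b * ybFactor P c a d * ybFactor P c b d =
      ybFactor P c b d * ybFactor P c a d * ybFactor P c a b := by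
  obtain ⟨h1, h2, h3, h4⟩ := map_swap_mul_map_swap (P := P) hab had hbd
  have hu : c a - c b ≠ 0 := sub_ne_zero.2 (hc.ne hab)
  have hv : c a - c d ≠ 0 := sub_ne_zero.2 (hc.ne had)
  have hw : c b - c d ≠ 0 := sub_ne_zero.2 (hc.ne hbd)
  have key : (c a - c b)⁻¹ * (c a - c d)⁻¹ + (c a - c d)⁻¹ * (c b - c d)⁻¹ =
      (c a - c b)⁻¹ * (c b - c d)⁻¹ := by
    field_simp
    ring
  unfold ybFactor
  generalize (c a - c b)⁻¹ = u at *
  generalize (c a - c d)⁻¹ = v at *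
  generalize (c b - c d)⁻¹ = w at *
  generalize P (swap a b) = p at *
  generalize P (swap a d) = q at *
  generalize P (swap b d) = r at *
  have e1 : p * q * r = r * q * p := by rw [h2, mul_assoc, h3, mul_assoc]
  rw [one_sub_smul_mul_three, one_sub_smul_mul_three, e1, ← h1, ← h2, ← h3, ← h4]
  match_scalars
  any_goals ring1
  · linear_combination key
  · linear_combination -key

lemma commute_ybFactor {a b d e : ι} (had : a ≠ d) (hae : a ≠ e) (hbd : b ≠ d) (hbe : b ≠ e) :
    Commute (ybFactor P c a b) (ybFactor P c d e) := by
  have h : Commute (P (swap a b)) (P (swap d e)) := by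
    refine Commute.map ?_ P
    refine (Perm.Disjoint.commute ?_)
    intro x
    simp only [swap_apply_def]
    grind
  exact ((Commute.one_left _).sub_left
    (((Commute.one_right _).sub_right (h.smul_right _)).smul_left _))

lemma commute_ybFactor_ybRow {a b d : ι} {L : List ι} (had : a ≠ d) (hbd : b ≠ d)
    (ha : a ∉ L) (hb : b ∉ L) : Commute (ybFactor P c a b) (ybRow P c d L) := by
  refine Commute.list_prod_right _ _ fun x hx => ?_
  obtain ⟨e, he, rfl⟩ := List.mem_map.1 hx
  exact commute_ybFactor had (by grind) hbd (by grind)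

lemma commute_ybFactor_fusionProd {a b : ι} {L : List ι} (ha : a ∉ L) (hb : b ∉ L) :
    Commute (ybFactor P c a b) (fusionProd P c L) := by
  induction L with
  | nil => exact Commute.one_right _
  | cons d L ih =>
    simp only [List.mem_cons, not_or] at ha hb
    exact (commute_ybFactor_ybRow ha.1 hb.1 ha.2 hb.2).mul_right (ih ha.2 hb.2)

lemma commute_ybRow_fusionProd {a : ι} {L M : List ι} (ha : a ∉ M) (hLM : L.Disjoint M) :
    Commute (ybRow P c a L) (fusionProd P c M) := by
  refine Commute.list_prod_left _ _ fun x hx => ?_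
  obtain ⟨e, he, rfl⟩ := List.mem_map.1 hx
  exact commute_ybFactor_fusionProd ha (hLM he)

lemma ybFactor_mul_ybRow_mul_ybRow (hc : Function.Injective c) {a b : ι} (hab : a ≠ b)
    {L : List ι} (hL : L.Nodup) (ha : a ∉ L) (hb : b ∉ L) :
    ybFactor P c a b * ybRow P c a L * ybRow P c b L =
      ybRow P c b L * ybRow P c a L * ybFactor P c a b := by
  induction L with
  | nil => simp
  | cons d L ih =>
    simp only [List.mem_cons, not_or] at ha hb
    rw [List.nodup_cons] at hL
    have c1 : Commute (ybFactor P c b d) (ybRow P c a L) :=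
      commute_ybFactor_ybRow hab.symm (Ne.symm ha.1) hb.2 hL.1
    have c2 : Commute (ybFactor P c a d) (ybRow P c b L) :=
      commute_ybFactor_ybRow hab (Ne.symm hb.1) ha.2 hL.1
    have e := yang_baxter (P := P) hc hab ha.1 hb.1
    simp only [ybRow_cons]
    calc _ = ybFactor P c a b * ybFactor P c a d * (ybRow P c a L * ybFactor P c b d)
          * ybRow P c b L := by simp only [mul_assoc]
      _ = (ybFactor P c a b * ybFactor P c a d * ybFactor P c b d) * (ybRow P c a L
          * ybRow P c b L) := by rw [← c1.eq]; simp only [mul_assoc]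
      _ = ybFactor P c b d * ybFactor P c a d * (ybFactor P c a b * ybRow P c a L
          * ybRow P c b L) := by rw [e]; simp only [mul_assoc]
      _ = ybFactor P c b d * (ybFactor P c a d * ybRow P c b L) * ybRow P c a L
          * ybFactor P c a b := by rw [ih hL.2 ha.2 hb.2]; simp only [mul_assoc]
      _ = _ := by rw [c2.eq]; simp only [mul_assoc]

lemma ybRow_mul_fusionProd (hc : Function.Injective c) {a : ι} {L : List ι} (hL : L.Nodup)
    (ha : a ∉ L) :
    ybRow P c a L * fusionProd P c L = fusionProd P c L * ybRow P c a L.reverse := by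
  induction L with
  | nil => simp
  | cons d L ih =>
    simp only [List.mem_cons, not_or] at ha
    rw [List.nodup_cons] at hL
    have e := ybFactor_mul_ybRow_mul_ybRow (P := P) hc ha.1 hL.2 ha.2 hL.1
    have c1 : Commute (ybFactor P c a d) (fusionProd P c L) :=
      commute_ybFactor_fusionProd ha.2 hL.1
    simp only [ybRow_cons, fusionProd, List.reverse_cons, ybRow_append, ybRow_nil, mul_one]
    calc _ = (ybFactor P c a d * ybRow P c a L * ybRow P c d L) * fusionProd P c L := by
          simp only [mul_assoc]
      _ = ybRow P c d L * ybRow P c a L * (ybFactor P c a d * fusionProd P c L) := by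
          rw [e]; simp only [mul_assoc]
      _ = ybRow P c d L * (ybRow P c a L * fusionProd P c L) * ybFactor P c a d := by
          rw [c1.eq]; simp only [mul_assoc]
      _ = _ := by rw [ih hL.2 ha.2]; simp only [mul_assoc]

lemma star_fusionProd [StarRing E] [StarModule ℂ E] (hP : ∀ σ, star (P σ) = P σ⁻¹)
    (hcr : ∀ a, star (c a) = c a) (hc : Function.Injective c) {L : List ι} (hL : L.Nodup) :
    star (fusionProd P c L) = fusionProd P c L := by
  have hy (a b : ι) : star (ybFactor P c a b) = ybFactor P c a b := by
    simp [ybFactor, hP, hcr]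
  have hr (a : ι) (L : List ι) : star (ybRow P c a L) = ybRow P c a L.reverse := by
    induction L with
    | nil => simp
    | cons d L ih => simp [ybRow_append, ih, hy]
  induction L with
  | nil => simp [fusionProd]
  | cons d L ih =>
    rw [List.nodup_cons] at hL
    rw [fusionProd, star_mul, hr, ih hL.2, ybRow_mul_fusionProd hc hL.2 hL.1]

/-- The ordered product of the rows `ybRow P c a M` over `a` in a list. -/
def ybCross (P : Perm ι →* E) (c : ι → ℂ) (L M : List ι) : E :=
  (L.map fun a => ybRow P c a M).prod

lemma fusionProd_append {L M : List ι} (hL : (L ++ M).Nodup) :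
    fusionProd P c (L ++ M) = fusionProd P c L * ybCross P c L M * fusionProd P c M := by
  induction L with
  | nil => simp [fusionProd, ybCross]
  | cons a L ih =>
    rw [List.cons_append, List.nodup_cons] at hL
    have hd : L.Disjoint M := List.disjoint_of_nodup_append hL.2
    have c1 : Commute (ybRow P c a M) (fusionProd P c L) :=
      commute_ybRow_fusionProd (by grind) hd.symm
    rw [List.cons_append, fusionProd, fusionProd, ih hL.2, ybRow_append]
    simp only [ybCross, List.map_cons, List.prod_cons, mul_assoc]
    rw [← mul_assoc (ybRow P c a M), c1.eq]
    simp only [mul_assoc]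

lemma ybCross_mul_fusionProd (hc : Function.Injective c) {L M : List ι} (hM : M.Nodup)
    (hLM : L.Disjoint M) :
    ybCross P c L M * fusionProd P c M = fusionProd P c M * ybCross P c L M.reverse := by
  induction L with
  | nil => simp [ybCross]
  | cons a L ih =>
    rw [List.disjoint_cons_left] at hLM
    simp only [ybCross, List.map_cons, List.prod_cons, mul_assoc] at ih ⊢
    rw [ih hLM.2, ← mul_assoc, ybRow_mul_fusionProd hc hM hLM.1, mul_assoc]

/-- A fusion product over a list with head `o` factors as the fusion products of `o` followed by
either half of the tail, times mixed factors. -/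
lemma fusionProd_cons_append (hc : Function.Injective c) {o : ι} {L M : List ι}
    (hL : (o :: (L ++ M)).Nodup) :
    fusionProd P c (o :: (L ++ M)) =
      fusionProd P c (o :: L) * fusionProd P c (o :: M) * ybCross P c L M.reverse := by
  have h1 := List.nodup_cons.1 hL
  have hd : L.Disjoint M := List.disjoint_of_nodup_append h1.2
  rw [← List.cons_append, fusionProd_append hL, fusionProd.eq_2 P c o M]
  have : ybCross P c (o :: L) M = ybRow P c o M * ybCross P c L M := by simp [ybCross]
  rw [this]
  simp only [mul_assoc]
  rw [ybCross_mul_fusionProd hc (List.Nodup.of_append_right h1.2) hd]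

lemma ybFactor_mul_ybFactor_swap (a b : ι) :
    ybFactor P c a b * ybFactor P c b a = (1 - (c a - c b)⁻¹ * (c a - c b)⁻¹) • (1 : E) := by
  have h : (c b - c a)⁻¹ = -(c a - c b)⁻¹ := by rw [← inv_neg, neg_sub]
  unfold ybFactor
  rw [h, swap_comm b a]
  generalize (c a - c b)⁻¹ = z
  simp only [neg_smul, sub_neg_eq_add, sub_mul, mul_add, mul_one, one_mul, smul_mul_assoc,
    mul_smul_comm, map_swap_mul_self]
  module

lemma one_sub_inv_mul_inv_ne_zero {x : ℂ} (h1 : x ≠ 1) (h2 : x ≠ -1) :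
    1 - x⁻¹ * x⁻¹ ≠ 0 := by
  rw [← mul_inv, sub_ne_zero, ne_comm, Ne, inv_eq_one, mul_self_eq_one_iff]
  tauto

lemma isUnit_ybFactor {a b : ι} (h1 : c a - c b ≠ 1) (h2 : c a - c b ≠ -1) :
    IsUnit (ybFactor P c a b) := by
  have hk := one_sub_inv_mul_inv_ne_zero h1 h2
  have e1 := ybFactor_mul_ybFactor_swap (P := P) (c := c) a b
  have e2 := ybFactor_mul_ybFactor_swap (P := P) (c := c) b a
  have h : (c b - c a)⁻¹ = -(c a - c b)⁻¹ := by rw [← inv_neg, neg_sub]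
  rw [h, neg_mul_neg] at e2
  refine ⟨⟨ybFactor P c a b, (1 - (c a - c b)⁻¹ * (c a - c b)⁻¹)⁻¹ • ybFactor P c b a, ?_, ?_⟩, rfl⟩
  · rw [mul_smul_comm, e1, smul_smul, inv_mul_cancel₀ hk, one_smul]
  · rw [smul_mul_assoc, e2, smul_smul, inv_mul_cancel₀ hk, one_smul]

lemma ybFactor_mul_ybRow_swap (hc : Function.Injective c) {a b d : ι} {K L : List ι}
    (hd : (d :: (K ++ a :: b :: L)).Nodup) :
    ybFactor P c a b * ybRow P c d (K ++ b :: a :: L) =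
      ybRow P c d (K ++ a :: b :: L) * ybFactor P c a b := by
  have h := List.nodup_cons.1 hd
  have h2 := List.nodup_append.1 h.2
  have ha : a ∉ K := by grind
  have hb : b ∉ K := by grind
  have haL : a ∉ L := by grind
  have hbL : b ∉ L := by grind
  have hda : d ≠ a := by grind
  have hdb : d ≠ b := by grind
  have hab : a ≠ b := by grind
  have c1 : Commute (ybFactor P c a b) (ybRow P c d K) :=
    commute_ybFactor_ybRow hda.symm hdb.symm ha hb
  have c2 : Commute (ybFactor P c a b) (ybRow P c d L) :=
    commute_ybFactor_ybRow hda.symm hdb.symm haL hbL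
  have e := yang_baxter (P := P) hc hda hdb hab
  simp only [ybRow_append, ybRow_cons]
  rw [← mul_assoc, c1.eq, mul_assoc, mul_assoc]
  congr 1
  rw [← mul_assoc, ← mul_assoc, ← e]
  simp only [mul_assoc]
  rw [c2.eq]

lemma fusionProd_swap (hc : Function.Injective c) {a b : ι} {K L : List ι}
    (h : (K ++ a :: b :: L).Nodup) :
    (1 - (c a - c b)⁻¹ * (c a - c b)⁻¹) • fusionProd P c (K ++ a :: b :: L) =
      ybFactor P c a b * fusionProd P c (K ++ b :: a :: L) * ybFactor P c a b := by
  induction K with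
  | nil =>
    have ha : a ∉ L := by simp at h; tauto
    have hb : b ∉ L := by simp at h; tauto
    have hab : a ≠ b := by simp at h; tauto
    have hL : L.Nodup := by simp at h; tauto
    have e := ybFactor_mul_ybRow_mul_ybRow (P := P) hc hab hL ha hb
    have c1 : Commute (ybFactor P c a b) (fusionProd P c L) :=
      commute_ybFactor_fusionProd ha hb
    have e1 := ybFactor_mul_ybFactor_swap (P := P) (c := c) a b
    have e2 : fusionProd P c (a :: b :: L) =
        ybRow P c b L * ybRow P c a L * fusionProd P c L * ybFactor P c a b := by
      rw [fusionProd, fusionProd, ybRow_cons, ← mul_assoc, e, mul_assoc, c1.eq]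
      simp only [mul_assoc]
    rw [List.nil_append, List.nil_append, e2, fusionProd, fusionProd, ybRow_cons,
      ← smul_one_mul, ← e1]
    simp only [mul_assoc]
  | cons d K ih =>
    have e := ybFactor_mul_ybRow_swap (P := P) hc (d := d) (K := K) h
    rw [List.cons_append, List.cons_append, fusionProd, fusionProd, ← mul_assoc, e, mul_assoc,
      mul_assoc, ← mul_assoc (ybFactor P c a b), ← ih (List.nodup_cons.1 h).2, mul_smul_comm]

/-- The subalgebra generated by the image of a representation of a symmetric group. -/
def permAlg (P : Perm ι →* E) : Subalgebra ℂ E := Algebra.adjoin ℂ (Set.range P)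

omit [DecidableEq ι] in
lemma map_mem_permAlg (σ : Perm ι) : P σ ∈ permAlg P := Algebra.subset_adjoin ⟨σ, rfl⟩

lemma ybFactor_mem_permAlg (a b : ι) : ybFactor P c a b ∈ permAlg P :=
  sub_mem (one_mem _) (Subalgebra.smul_mem _ (map_mem_permAlg _) _)

lemma ybRow_mem_permAlg (a : ι) (L : List ι) : ybRow P c a L ∈ permAlg P := by
  refine Subalgebra.list_prod_mem _ fun x hx => ?_
  obtain ⟨b, -, rfl⟩ := List.mem_map.1 hx
  exact ybFactor_mem_permAlg a b

lemma fusionProd_mem_permAlg (L : List ι) : fusionProd P c L ∈ permAlg P := by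
  induction L with
  | nil => exact one_mem _
  | cons a L ih => exact mul_mem (ybRow_mem_permAlg a L) ih

lemma ybCross_mem_permAlg (L M : List ι) : ybCross P c L M ∈ permAlg P := by
  refine Subalgebra.list_prod_mem _ fun x hx => ?_
  obtain ⟨b, -, rfl⟩ := List.mem_map.1 hx
  exact ybRow_mem_permAlg b M

/-- `x` and `y` differ by invertible left and right factors from the group algebra of the
symmetric group. -/
def PermEquiv (P : Perm ι →* E) (x y : E) : Prop :=
  ∃ u ∈ permAlg P, ∃ v ∈ permAlg P, IsUnit u ∧ IsUnit v ∧ x = u * y * v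

omit [DecidableEq ι] in
lemma PermEquiv.refl (x : E) : PermEquiv P x x :=
  ⟨1, one_mem _, 1, one_mem _, isUnit_one, isUnit_one, by simp⟩

omit [DecidableEq ι] in
lemma PermEquiv.trans {x y z : E} (h1 : PermEquiv P x y) (h2 : PermEquiv P y z) :
    PermEquiv P x z := by
  obtain ⟨u, hu, v, hv, iu, iv, rfl⟩ := h1
  obtain ⟨u', hu', v', hv', iu', iv', rfl⟩ := h2
  exact ⟨u * u', mul_mem hu hu', v' * v, mul_mem hv' hv, iu.mul iu', iv'.mul iv,
    by simp only [mul_assoc]⟩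

lemma permEquiv_fusionProd_swap (hc : Function.Injective c) {a b : ι} {K L : List ι}
    (h : (K ++ a :: b :: L).Nodup) (h1 : c a - c b ≠ 1) (h2 : c a - c b ≠ -1) :
    PermEquiv P (fusionProd P c (K ++ a :: b :: L)) (fusionProd P c (K ++ b :: a :: L)) := by
  have hk := one_sub_inv_mul_inv_ne_zero h1 h2
  have e := fusionProd_swap (P := P) hc h
  have i := isUnit_ybFactor (P := P) h1 h2
  refine ⟨(1 - (c a - c b)⁻¹ * (c a - c b)⁻¹)⁻¹ • ybFactor P c a b,
    Subalgebra.smul_mem _ (ybFactor_mem_permAlg a b) _, ybFactor P c a b,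
    ybFactor_mem_permAlg a b, ?_, i, ?_⟩
  · rw [← smul_one_mul]
    exact ((isUnit_one (M := E)).smul (Units.mk0 _ (inv_ne_zero hk))).mul i
  · rw [smul_mul_assoc, smul_mul_assoc, ← e, smul_smul, inv_mul_cancel₀ hk, one_smul]

lemma permEquiv_fusionProd_move (hc : Function.Injective c) {a : ι} {K L M : List ι}
    (h : (K ++ a :: (L ++ M)).Nodup) (h1 : ∀ b ∈ L, c a - c b ≠ 1 ∧ c a - c b ≠ -1) :
    PermEquiv P (fusionProd P c (K ++ a :: (L ++ M))) (fusionProd P c (K ++ (L ++ a :: M))) := by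
  induction L generalizing K with
  | nil => exact PermEquiv.refl _
  | cons b L ih =>
    have hb := h1 b (by simp)
    refine (permEquiv_fusionProd_swap hc h hb.1 hb.2).trans ?_
    have := ih (K := K ++ [b]) (by
        rw [List.append_assoc]
        refine (List.Perm.nodup_iff ?_).1 h
        exact List.Perm.append_left K (List.Perm.swap _ _ _)) fun d hd => h1 d (by simp [hd])
    simpa using this

/-- The tail of the list of a fusion product can be partitioned when the values of `c` on the two
parts are far enough from each other. -/
lemma permEquiv_fusionProd_partition (hc : Function.Injective c) (p : ι → Prop)
    [DecidablePred p] {K L : List ι} (h : (K ++ L).Nodup)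
    (h1 : ∀ a b, ¬ p a → p b → a ∈ L → b ∈ L → c a - c b ≠ 1 ∧ c a - c b ≠ -1) :
    PermEquiv P (fusionProd P c (K ++ L))
      (fusionProd P c (K ++ (L.filter p ++ L.filter (¬ p ·)))) := by
  induction L generalizing K with
  | nil => exact PermEquiv.refl _
  | cons a L ih =>
    have := ih (K := K ++ [a]) (by simpa using h)
      fun x y hx hy hxL hyL => h1 x y hx hy (by simp [hxL]) (by simp [hyL])
    rw [List.append_assoc, List.append_assoc, List.singleton_append, List.singleton_append] at this
    refine this.trans ?_
    by_cases ha : p a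
    · simp only [List.filter_cons, ha, decide_true, if_true, not_true, decide_false,
        List.cons_append, Bool.false_eq_true, if_false]
      exact PermEquiv.refl _
    · simp only [List.filter_cons, ha, decide_false, if_false, not_false_eq_true, decide_true,
        if_true, Bool.false_eq_true]
      refine permEquiv_fusionProd_move hc ?_ fun b hb => ?_
      · refine (List.Perm.nodup_iff ?_).1 h
        refine List.Perm.append_left K (List.Perm.cons a ?_)
        have := List.filter_append_perm (fun x => decide (p x)) L
        simpa using this.symm
      · have hb := List.mem_filter.1 hb
        exact h1 a b ha (by simpa using hb.2) (by simp) (by simp [hb.1])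

lemma fusionProd_map (σ : Perm ι) (L : List ι) :
    fusionProd P c (L.map σ) = P σ * fusionProd P (c ∘ σ) L * P σ⁻¹ := by
  have hσ : P σ⁻¹ * P σ = 1 := by rw [← map_mul, inv_mul_cancel, map_one]
  have hσ' : P σ * P σ⁻¹ = 1 := by rw [← map_mul, mul_inv_cancel, map_one]
  have hy (a b : ι) : ybFactor P c (σ a) (σ b) = P σ * ybFactor P (c ∘ σ) a b * P σ⁻¹ := by
    have : swap (σ a) (σ b) = σ * swap a b * σ⁻¹ := swap_apply_apply σ a b
    simp only [ybFactor, mul_sub, sub_mul, mul_one, hσ', Function.comp_apply, this, map_mul,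
      mul_smul_comm, smul_mul_assoc]
  have hr (a : ι) (L : List ι) :
      ybRow P c (σ a) (L.map σ) = P σ * ybRow P (c ∘ σ) a L * P σ⁻¹ := by
    induction L with
    | nil => simp [hσ']
    | cons d L ih =>
      rw [List.map_cons, ybRow_cons, ih, hy, ybRow_cons]
      simp only [mul_assoc]
      rw [← mul_assoc (P σ⁻¹) (P σ), hσ, one_mul]
  induction L with
  | nil => simp [fusionProd, hσ']
  | cons d L ih =>
    rw [List.map_cons, fusionProd, ih, hr, fusionProd]
    simp only [mul_assoc]
    rw [← mul_assoc (P σ⁻¹) (P σ), hσ, one_mul]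

/-- `h` is invariant under left multiplication by the permutations supported in a list. -/
def LeftInvariant (P : Perm ι →* E) (L : List ι) (h : E) : Prop :=
  ∀ σ : Perm ι, (∀ x ∉ L, σ x = x) → P σ * h = h

omit [DecidableEq ι] [Algebra ℂ E] in
lemma LeftInvariant.mono {L M : List ι} {h : E} (hM : LeftInvariant P M h) (hLM : L ⊆ M) :
    LeftInvariant P L h :=
  fun σ hσ => hM σ fun x hx => hσ x fun hx' => hx (hLM hx')

omit [Algebra ℂ E] in
lemma LeftInvariant.swap_mul {L : List ι} {h : E} (hL : LeftInvariant P L h) {i j : ι}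
    (hi : i ∈ L) (hj : j ∈ L) : P (swap i j) * h = h :=
  hL _ fun x hx => swap_apply_of_ne_of_ne (by grind) (by grind)

/-- The values of `c` along a list are `x, x + 1, x + 2, …`. -/
def Consecutive (c : ι → ℂ) : ℂ → List ι → Prop
  | _, [] => True
  | x, b :: L => c b = x ∧ Consecutive c (x + 1) L

lemma ybRow_mul_of_leftInvariant {a : ι} {L : List ι} {h : E} (hL : L.Nodup) (ha : a ∉ L)
    (hh : LeftInvariant P L h) (s : ℕ) (hcs : Consecutive c (c a + (s + 1)) L) :
    ybRow P c a L * h = h + ((s : ℂ) + 1)⁻¹ • ∑ i ∈ L.toFinset, P (swap a i) * h := by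
  induction L generalizing s with
  | nil => simp
  | cons b L ih =>
    obtain ⟨hb, hcs⟩ := hcs
    rw [List.nodup_cons] at hL
    simp only [List.mem_cons, not_or] at ha
    have hs1 : (s : ℂ) + 1 ≠ 0 := by exact_mod_cast s.succ_ne_zero
    have hs2 : (s : ℂ) + 1 + 1 ≠ 0 := by exact_mod_cast (s + 1).succ_ne_zero
    have := ih hL.2 ha.2 (hh.mono (by simp)) (s + 1) (by push_cast; convert hcs using 1; ring)
    have hsum : ∑ i ∈ L.toFinset, P (swap a b) * (P (swap a i) * h) =
        ∑ i ∈ L.toFinset, P (swap a i) * h := by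
      refine Finset.sum_congr rfl fun i hi => ?_
      have hi : i ∈ L := by simpa using hi
      have hai : a ≠ i := by grind
      have hbi : b ≠ i := by grind
      rw [← mul_assoc, (map_swap_mul_map_swap ha.1 hai hbi).1, mul_assoc,
        hh.swap_mul (by simp) (by simp [hi])]
    have hd : c a - c b = -((s : ℂ) + 1) := by rw [hb]; ring
    rw [ybRow_cons, mul_assoc, this, ybFactor, hd, sub_mul, one_mul, smul_mul_assoc, mul_add,
      mul_smul_comm, Finset.mul_sum, hsum, List.toFinset_cons,
      Finset.sum_insert (by simpa using hL.1)]
    push_cast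
    generalize ∑ i ∈ L.toFinset, P (swap a i) * h = S
    match_scalars <;> field_simp
    ring

/-- The fusion product along consecutive values is a symmetrizer. -/
lemma leftInvariant_fusionProd {L : List ι} (hL : L.Nodup) (x : ℂ) (hcs : Consecutive c x L) :
    LeftInvariant P L (fusionProd P c L) := by
  induction L generalizing x with
  | nil =>
    intro σ hσ
    have : σ = 1 := Equiv.ext fun x => hσ x (by simp)
    simp [this]
  | cons a L ih =>
    obtain ⟨ha, hcs⟩ := hcs
    rw [List.nodup_cons] at hL
    have hinv := ih hL.2 _ hcs
    have hrow := ybRow_mul_of_leftInvariant (c := c) hL.2 hL.1 hinv 0 (by simpa [ha] using hcs)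
    have hsum : fusionProd P c (a :: L) =
        ∑ i ∈ (a :: L).toFinset, P (swap a i) * fusionProd P c L := by
      rw [fusionProd, hrow, List.toFinset_cons, Finset.sum_insert (by simpa using hL.1),
        swap_self]
      change _ = P 1 * _ + _
      simp
    intro σ hσ
    rw [hsum, Finset.mul_sum]
    have hmem (x : ι) : σ x ∈ (a :: L).toFinset ↔ x ∈ (a :: L).toFinset := by
      simp only [List.mem_toFinset]
      constructor
      · intro h
        by_contra hx
        rw [hσ x hx] at h
        exact hx h
      · intro h
        by_contra hx
        have := σ.injective (hσ _ hx)
        rw [this] at hx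
        exact hx h
    refine Finset.sum_equiv σ (fun i => (hmem i).symm) fun i hi => ?_
    have e : σ * swap a i = swap a (σ i) * (swap a (σ i) * σ * swap a i) := by
      rw [mul_assoc, ← mul_assoc (swap a (σ i)), swap_mul_self, one_mul]
    rw [← mul_assoc, ← map_mul, e, map_mul, mul_assoc, hinv _ fun x hx => ?_]
    have hσi := (hmem i).2 hi
    simp only [List.mem_toFinset, List.mem_cons] at hi hσi hmem
    simp only [Perm.mul_apply, swap_apply_def]
    have := hσ x
    have := σ.injective.eq_iff (a := x) (b := i)
    have := hmem x
    grind

/-- The twist of a representation of a symmetric group by the sign character. -/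
def signTwist (P : Perm ι →* E) [Fintype ι] : Perm ι →* E where
  toFun σ := ((Perm.sign σ : ℤ) : ℂ) • P σ
  map_one' := by simp
  map_mul' σ τ := by simp [smul_smul, mul_comm]

lemma fusionProd_signTwist [Fintype ι] {L : List ι} (hL : L.Nodup) :
    fusionProd (signTwist P) (-c) L = fusionProd P c L := by
  have hy (a b : ι) (hab : a ≠ b) : ybFactor (signTwist P) (-c) a b = ybFactor P c a b := by
    have : (-c a - -c b)⁻¹ = -(c a - c b)⁻¹ := by rw [← inv_neg]; ring_nf
    have e : signTwist P (swap a b) = -P (swap a b) := by simp [signTwist, Perm.sign_swap hab]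
    rw [ybFactor, Pi.neg_apply, Pi.neg_apply, this, e, smul_neg, neg_smul, neg_neg, ybFactor]
  induction L with
  | nil => rfl
  | cons a L ih =>
    rw [List.nodup_cons] at hL
    rw [fusionProd, fusionProd, ih hL.2]
    congr 1
    unfold ybRow
    congr 1
    exact List.map_congr_left fun b hb => hy a b (by grind)

/-- Fusion products act by a nonzero scalar on the left invariant elements. -/
lemma fusionProd_mul_of_leftInvariant {L : List ι} {h : E} (hh : LeftInvariant P L h)
    (x : ℂ) (hcs : Consecutive c x L) :
    ∃ k : ℂ, k ≠ 0 ∧ fusionProd P c L * h = k • h := by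
  have hrow {a : ι} {L : List ι} {h : E} (hh : LeftInvariant P (a :: L) h) (s : ℕ)
      (hcs : Consecutive c (c a + (s + 1)) L) :
      ∃ k : ℂ, k ≠ 0 ∧ ybRow P c a L * h = k • h := by
    induction L generalizing s with
    | nil => exact ⟨1, one_ne_zero, by simp⟩
    | cons b L ih =>
      obtain ⟨hb, hcs⟩ := hcs
      obtain ⟨k, hk, e⟩ := ih (hh.mono (by simp)) (s + 1)
        (by push_cast; convert hcs using 1; ring)
      have hs1 : (s : ℂ) + 1 ≠ 0 := by exact_mod_cast s.succ_ne_zero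
      have hs2 : (s : ℂ) + 1 + 1 ≠ 0 := by exact_mod_cast (s + 1).succ_ne_zero
      have hd : c a - c b = -((s : ℂ) + 1) := by rw [hb]; ring
      refine ⟨k * (1 + ((s : ℂ) + 1)⁻¹), mul_ne_zero hk ?_, ?_⟩
      · rw [show 1 + ((s : ℂ) + 1)⁻¹ = (s + 1 + 1) / (s + 1) by field_simp]
        exact div_ne_zero hs2 hs1
      · rw [ybRow_cons, mul_assoc, e, mul_smul_comm, ybFactor, hd, sub_mul, one_mul,
          smul_mul_assoc, hh.swap_mul (by simp) (by simp), mul_smul, inv_neg]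
        module
  induction L generalizing x with
  | nil => exact ⟨1, one_ne_zero, by simp [fusionProd]⟩
  | cons a L ih =>
    obtain ⟨ha, hcs⟩ := hcs
    obtain ⟨k, hk, e⟩ := ih (hh.mono (by simp)) _ hcs
    obtain ⟨k', hk', e'⟩ := hrow hh 0 (by simpa [ha] using hcs)
    exact ⟨k * k', mul_ne_zero hk hk', by rw [fusionProd, mul_assoc, e, mul_smul_comm, e', mul_smul]⟩

/-- The key property of a Young symmetrizer `h * a`. -/
lemma exists_mul_map_mul_eq_smul [Fintype ι] {R C : List ι} {o : ι} (hRC : ∀ x, x ∈ R ∨ x ∈ C)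
    (hR : o ∈ R) (hC : o ∈ C) {h a : E}
    (hh : ∀ i ∈ R, ∀ j ∈ R, h * P (swap i j) = h)
    (ha : ∀ i ∈ C, ∀ j ∈ C, i ≠ j → P (swap i j) * a = -a) (σ : Perm ι) :
    ∃ k : ℂ, h * P σ * a = k • (h * a) := by
  induction hn : σ.support.card using Nat.strong_induction_on generalizing σ with
  | _ n ih =>
  subst hn
  by_cases h1 : ∃ r ∈ R, σ r ∈ R ∧ σ r ≠ r
  · obtain ⟨r, hr, hσr, hne⟩ := h1
    obtain ⟨k, hk⟩ := ih _ (Perm.card_support_swap_mul hne) _ rfl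
    refine ⟨k, ?_⟩
    rw [← hk, map_mul, ← mul_assoc, hh r hr _ hσr]
  by_cases h2 : ∃ r ∈ C, σ r ∈ C ∧ σ r ≠ r
  · obtain ⟨r, hr, hσr, hne⟩ := h2
    have hlt := Perm.card_support_swap_mul (f := σ⁻¹) (x := σ r) (by simpa using hne.symm)
    rw [show σ⁻¹ (σ r) = r by simp, Perm.support_inv] at hlt
    obtain ⟨k, hk⟩ := ih _ (by
      rw [← Perm.support_inv, mul_inv_rev, swap_inv]
      exact hlt) (σ * swap (σ r) r) rfl
    refine ⟨-k, ?_⟩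
    rw [neg_smul, ← hk, map_mul, ← mul_assoc h, mul_assoc (h * P σ), ha _ hσr _ hr hne, mul_neg,
      neg_neg]
  push Not at h1 h2
  have hoo : σ o = o := by
    rcases hRC (σ o) with h | h
    · exact h1 o hR h
    · exact h2 o hC h
  by_cases h3 : ∃ i ∈ C, i ≠ o ∧ σ i ∈ R
  · obtain ⟨i, hi, hio, hσi⟩ := h3
    refine ⟨0, ?_⟩
    have e : swap (σ o) (σ i) = σ * swap o i * σ⁻¹ := swap_apply_apply σ o i
    rw [hoo] at e
    have e1 : h * P σ * a = -(h * P σ * a) := by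
      nth_rewrite 1 [← hh o hR _ hσi]
      rw [mul_assoc h, ← map_mul, e, inv_mul_cancel_right, map_mul, ← mul_assoc, mul_assoc,
        ha o hC i hi hio.symm, mul_neg]
    have e2 : (2 : ℂ) • (h * P σ * a) = 0 := by
      rw [two_smul]
      nth_rewrite 1 [e1]
      exact neg_add_cancel _
    rw [zero_smul]
    exact (smul_eq_zero_iff_right two_ne_zero).1 e2
  · push Not at h3
    have hC1 (i : ι) (hi : i ∈ C) : σ i = i := by
      by_cases hio : i = o
      · rw [hio, hoo]
      · exact h2 i hi ((hRC _).resolve_left (h3 i hi hio))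
    have hσ : σ = 1 := by
      refine Equiv.ext fun x => ?_
      rcases hRC x with hx | hx
      · rcases hRC (σ x) with h | h
        · exact h1 x hx h
        · exact σ.injective (hC1 _ h)
      · exact hC1 x hx
    exact ⟨1, by simp [hσ]⟩

omit [DecidableEq ι] in
lemma mem_permAlg_iff {z : E} : z ∈ permAlg P ↔ z ∈ Submodule.span ℂ (Set.range P) := by
  rw [permAlg, ← MonoidHom.coe_mrange, ← Subalgebra.mem_toSubmodule, Algebra.adjoin_eq_span,
    Submonoid.closure_eq]

/-- `q` is a multiple of a primitive idempotent of the group algebra of the symmetric group. -/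
def IsPrimitive (P : Perm ι →* E) (q : E) : Prop :=
  ∀ z ∈ permAlg P, ∃ k : ℂ, q * z * q = k • q

lemma isPrimitive_symmetrizer [Fintype ι] {R C : List ι} {o : ι} (hRC : ∀ x, x ∈ R ∨ x ∈ C)
    (hR : o ∈ R) (hC : o ∈ C) {h a : E}
    (hmem : h ∈ permAlg P) (amem : a ∈ permAlg P)
    (hh : ∀ i ∈ R, ∀ j ∈ R, h * P (swap i j) = h)
    (ha : ∀ i ∈ C, ∀ j ∈ C, i ≠ j → P (swap i j) * a = -a) : IsPrimitive P (h * a) := by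
  intro z hz
  have key {y : E} (hy : y ∈ permAlg P) : ∃ k : ℂ, h * y * a = k • (h * a) := by
    rw [mem_permAlg_iff] at hy
    induction hy using Submodule.span_induction with
    | mem x hx =>
      obtain ⟨σ, rfl⟩ := hx
      exact exists_mul_map_mul_eq_smul hRC hR hC hh ha σ
    | zero => exact ⟨0, by simp⟩
    | add x y hx hy ihx ihy =>
      obtain ⟨⟨k, hk⟩, l, hl⟩ := ihx, ihy
      exact ⟨k + l, by rw [mul_add, add_mul, hk, hl, add_smul]⟩
    | smul k x hx ihx =>
      obtain ⟨l, hl⟩ := ihx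
      exact ⟨k * l, by rw [mul_smul_comm, smul_mul_assoc, hl, mul_smul]⟩
  obtain ⟨k, hk⟩ := key (mul_mem (mul_mem amem hz) hmem)
  exact ⟨k, by rw [← hk]; simp only [mul_assoc]⟩

omit [DecidableEq ι] in
lemma IsPrimitive.mul_mul {q : E} (hq : IsPrimitive P q) {u v : E} (hu : u ∈ permAlg P)
    (hv : v ∈ permAlg P) : IsPrimitive P (u * q * v) := by
  intro z hz
  obtain ⟨k, hk⟩ := hq (v * z * u) (mul_mem (mul_mem hv hz) hu)
  refine ⟨k, ?_⟩
  rw [← smul_mul_assoc, ← mul_smul_comm, ← hk]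
  simp only [mul_assoc]

omit [DecidableEq ι] in
/-- Two elements that factor through a common primitive element are linked by an element of the
group algebra. -/
lemma IsPrimitive.exists_mul_mul_ne_zero {q : E} (hq : IsPrimitive P q) (hmem : q ∈ permAlg P)
    {u v u' v' : E} (hu : u ∈ permAlg P) (hv : v ∈ permAlg P) (hu' : u' ∈ permAlg P)
    (hv' : v' ∈ permAlg P) (h : (u * q * v) * (u * q * v) ≠ 0)
    (h' : (u' * q * v') * (u' * q * v') ≠ 0) :
    ∃ z ∈ permAlg P, (u' * q * v') * z * (u * q * v) ≠ 0 := by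
  obtain ⟨k, hk⟩ := hq (v * u) (mul_mem hv hu)
  obtain ⟨k', hk'⟩ := hq (v' * u') (mul_mem hv' hu')
  have e : (u * q * v) * (u * q * v) = k • (u * q * v) := by
    rw [← smul_mul_assoc, ← mul_smul_comm, ← hk]
    simp only [mul_assoc]
  have e' : (u' * q * v') * (u' * q * v') = k' • (u' * q * v') := by
    rw [← smul_mul_assoc, ← mul_smul_comm, ← hk']
    simp only [mul_assoc]
  have hk0 : k ≠ 0 := by rintro rfl; exact h (by rw [e, zero_smul])
  have hk0' : k' ≠ 0 := by rintro rfl; exact h' (by rw [e', zero_smul])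
  have e1 : u' * q * v * (u * q * v') = k • (u' * q * v') := by
    rw [← smul_mul_assoc, ← mul_smul_comm, ← hk]
    simp only [mul_assoc]
  have e2 : (u' * q * v') * (u' * q * v) * (u * q * v) = (k' * k) • (u' * q * v) := by
    calc _ = u' * (q * (v' * u') * q) * (v * u * q * v) := by simp only [mul_assoc]
      _ = k' • (u' * (q * (v * u) * q) * v) := by
        rw [hk']; simp only [mul_smul_comm, smul_mul_assoc, mul_assoc]
      _ = _ := by rw [hk, mul_smul_comm, smul_mul_assoc, mul_smul]
  refine ⟨u' * q * v, mul_mem (mul_mem hu' hmem) hv, ?_⟩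
  rw [e2]
  refine smul_ne_zero (mul_ne_zero hk0' hk0) fun h0 => ?_
  rw [h0, zero_mul, eq_comm, smul_eq_zero_iff_right hk0] at e1
  exact h' (by rw [e1, zero_mul])

omit [Algebra ℂ E] in
lemma leftInvariant_sum_filter [Fintype ι] (L : List ι) :
    LeftInvariant P L (∑ σ : Perm ι with ∀ x ∉ L, σ x = x, P σ) := by
  intro τ hτ
  rw [Finset.mul_sum]
  refine Finset.sum_equiv (Equiv.mulLeft τ) (fun σ => ?_) fun σ _ => by simp
  simp only [Finset.mem_filter, Finset.mem_univ, true_and, Equiv.coe_mulLeft, Perm.mul_apply]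
  refine forall₂_congr fun x hx => ?_
  constructor
  · intro h
    rw [h, hτ x hx]
  · intro h
    exact τ.injective (h.trans (hτ x hx).symm)

lemma consecutive_mul_map_swap [Fintype ι] [StarRing E] [StarModule ℂ E]
    (hP : ∀ σ, star (P σ) = P σ⁻¹) (hcr : ∀ a, star (c a) = c a) (hc : Function.Injective c)
    {L : List ι} (hL : L.Nodup) {x : ℂ} (hcs : Consecutive c x L) {i j : ι} (hi : i ∈ L)
    (hj : j ∈ L) : fusionProd P c L * P (swap i j) = fusionProd P c L := by
  have h := (leftInvariant_fusionProd (P := P) hL x hcs).swap_mul hi hj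
  have h' := congrArg star h
  rwa [star_mul, star_fusionProd hP hcr hc hL, hP, swap_inv] at h'

lemma map_swap_mul_consecutive [Fintype ι] {L : List ι} (hL : L.Nodup) {x : ℂ}
    (hcs : Consecutive (-c) x L) {i j : ι} (hi : i ∈ L) (hj : j ∈ L) (hij : i ≠ j) :
    P (swap i j) * fusionProd P c L = -fusionProd P c L := by
  have h := (leftInvariant_fusionProd (P := signTwist P) hL x hcs).swap_mul hi hj
  have e : signTwist P (swap i j) = -P (swap i j) := by simp [signTwist, Perm.sign_swap hij]
  rwa [fusionProd_signTwist hL, e, neg_mul, neg_eq_iff_eq_neg] at h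

/-- The product of the row symmetrizer and the column antisymmetrizer of a hook does not vanish if
some `b` is invariant under the row group, but not annihilated by the signed sum over the column
group. -/
lemma fusionProd_mul_fusionProd_ne_zero [Fintype ι] [StarRing E] [StarModule ℂ E]
    (hP : ∀ σ, star (P σ) = P σ⁻¹) (hcr : ∀ a, star (c a) = c a) (hc : Function.Injective c)
    {R C : List ι} (hRn : R.Nodup) (hCn : C.Nodup) {x y : ℂ} (hR : Consecutive c x R)
    (hC : Consecutive (-c) y C) {b : E} (hbs : star b = b) (hb : LeftInvariant P R b)
    (hbC : b * ∑ σ : Perm ι with ∀ x ∉ C, σ x = x, signTwist P σ ≠ 0) :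
    fusionProd P c R * fusionProd P c C ≠ 0 := by
  obtain ⟨k, hk, e⟩ := fusionProd_mul_of_leftInvariant hb x hR
  obtain ⟨l, hl, e'⟩ := fusionProd_mul_of_leftInvariant
    (leftInvariant_sum_filter (P := signTwist P) C) y hC
  rw [fusionProd_signTwist hCn] at e'
  have e2 : b * fusionProd P c R = star k • b := by
    have := congrArg star e
    rwa [star_mul, star_fusionProd hP hcr hc hRn, hbs, star_smul, hbs] at this
  intro h0
  have : b * (fusionProd P c R * fusionProd P c C) *
      ∑ σ : Perm ι with ∀ x ∉ C, σ x = x, signTwist P σ = 0 := by rw [h0, mul_zero, zero_mul]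
  rw [← mul_assoc, e2, mul_assoc, e', mul_smul_comm, smul_mul_assoc, smul_smul] at this
  exact smul_ne_zero (mul_ne_zero hl (star_ne_zero.2 hk)) hbC this

/-- Factorization of the fusion product of a hook tableau. -/
lemma permEquiv_fusionProd_hook (hc : Function.Injective c) (p : ι → Prop) [DecidablePred p]
    {o : ι} {L : List ι} (hL : (o :: L).Nodup)
    (hpc : ∀ a ∈ L, ∀ b ∈ L, p a → ¬ p b →
      c a - c b ≠ 1 ∧ c a - c b ≠ -1) :
    PermEquiv P (fusionProd P c (o :: L))
      (fusionProd P c (o :: L.filter p) * fusionProd P c (o :: L.filter (¬ p ·))) := by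
  have h1 := permEquiv_fusionProd_partition (P := P) hc p (K := [o]) (L := L) hL
    fun a b ha hb haL hbL => by
      have := hpc b hbL a haL hb ha
      constructor
      · intro h
        exact this.2 (by linear_combination -h)
      · intro h
        exact this.1 (by linear_combination -h)
  refine h1.trans ?_
  have hperm : (o :: (L.filter p ++ L.filter (¬ p ·))).Perm (o :: L) := by
    refine List.Perm.cons o ?_
    have := List.filter_append_perm (fun x => decide (p x)) L
    simpa using this
  rw [List.singleton_append, fusionProd_cons_append hc (hperm.nodup_iff.2 hL)]
  refine ⟨1, one_mem _, _, ybCross_mem_permAlg _ _, isUnit_one, ?_, by rw [one_mul]⟩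
  unfold ybCross ybRow
  refine (Submonoid.list_prod_mem (IsUnit.submonoid E) ?_ :)
  intro x hx
  obtain ⟨a, ha, rfl⟩ := List.mem_map.1 hx
  refine Submonoid.list_prod_mem (IsUnit.submonoid E) ?_
  intro x hx
  obtain ⟨b, hb, rfl⟩ := List.mem_map.1 hx
  have ha := List.mem_filter.1 ha
  have hb := List.mem_filter.1 (List.mem_reverse.1 hb)
  have := hpc a ha.1 b hb.1 (by simpa using ha.2) (by simpa using hb.2)
  exact isUnit_ybFactor this.1 this.2

end Fusion

section Tensor

open Equiv

variable {N n : ℕ}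

/-- The action of the symmetric group on `V^{⊗ n}`. -/
def permOp (N n : ℕ) : Perm (Fin n) →* EndT N n where
  toFun σ := Matrix.of fun f g => if f ∘ σ = g then 1 else 0
  map_one' := by
    ext f g
    simp [Matrix.one_apply]
  map_mul' σ τ := by
    ext f g
    simp only [Matrix.mul_apply, Matrix.of_apply, ite_mul, one_mul, zero_mul, Finset.sum_ite_eq,
      Finset.mem_univ, if_true, Perm.coe_mul, Function.comp_assoc]
    exact if_congr Iff.rfl rfl rfl

lemma permOp_apply (σ : Perm (Fin n)) (f g : Fin n → Fin N) :
    permOp N n σ f g = if f ∘ σ = g then 1 else 0 := rfl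

lemma permOp_mul_apply (σ : Perm (Fin n)) (M : EndT N n) (f g : Fin n → Fin N) :
    (permOp N n σ * M) f g = M (f ∘ σ) g := by
  simp [Matrix.mul_apply, permOp_apply]

lemma comp_perm_eq_iff (σ : Perm (Fin n)) (f g : Fin n → Fin N) :
    f ∘ σ = g ↔ f = g ∘ (σ⁻¹ : Perm (Fin n)) := by
  constructor
  · rintro rfl
    ext x
    simp
  · rintro rfl
    ext x
    simp

lemma mul_permOp_apply (σ : Perm (Fin n)) (M : EndT N n) (f g : Fin n → Fin N) :
    (M * permOp N n σ) f g = M f (g ∘ (σ⁻¹ : Perm (Fin n))) := by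
  simp [Matrix.mul_apply, permOp_apply, comp_perm_eq_iff]

lemma star_permOp (σ : Perm (Fin n)) : star (permOp N n σ) = permOp N n σ⁻¹ := by
  ext f g
  rw [Matrix.star_apply, permOp_apply, permOp_apply, apply_ite star, star_one, star_zero]
  refine if_congr ?_ rfl rfl
  rw [comp_perm_eq_iff, eq_comm]

lemma flipOp_eq_permOp (a b : Fin n) : flipOp N n a b = permOp N n (swap a b) := by
  ext f g
  rw [permOp_apply, flipOp]
  have h (i : Fin n) : (if i ≠ a ∧ i ≠ b then (if f i = g i then (1 : ℂ) else 0) else 1) =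
      if (i ≠ a ∧ i ≠ b → f i = g i) then 1 else 0 := by
    split_ifs <;> tauto
  have key : ((f a = g b ∧ f b = g a) ∧ ∀ i ∈ Finset.univ, i ≠ a ∧ i ≠ b → f i = g i) ↔
      f ∘ swap a b = g := by
    rw [funext_iff]
    simp only [Function.comp_apply, swap_apply_def, Finset.mem_univ, true_implies]
    constructor
    · rintro ⟨⟨h1, h2⟩, h3⟩ i
      specialize h3 i
      grind
    · intro h
      refine ⟨⟨?_, ?_⟩, fun i hi => ?_⟩
      · have := h b; grind
      · have := h a; grind
      · have := h i; grind
  rw [Finset.prod_congr rfl fun i _ => h i, Finset.prod_boole]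
  by_cases hA : f a = g b ∧ f b = g a
  · rw [if_pos hA, one_mul]
    by_cases hf : f ∘ swap a b = g
    · rw [if_pos hf, if_pos (key.2 hf).2]
    · rw [if_neg hf, if_neg fun hB => hf (key.1 ⟨hA, hB⟩)]
  · rw [if_neg hA, zero_mul, if_neg fun h => hA (key.2 h).1]

/-- The pure tensor `W_1 ⊗ ⋯ ⊗ W_n` of endomorphisms of `V`. -/
def pureTensor (W : Fin n → Matrix (Fin N) (Fin N) ℂ) : EndT N n :=
  fun f g => ∏ i, W i (f i) (g i)

lemma pureTensor_mul (W Z : Fin n → Matrix (Fin N) (Fin N) ℂ) :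
    pureTensor W * pureTensor Z = pureTensor (W * Z) := by
  ext f g
  simp only [Matrix.mul_apply, pureTensor, Pi.mul_apply, Finset.prod_univ_sum,
    ← Finset.prod_mul_distrib, Fintype.piFinset_univ]

lemma pureTensor_one : pureTensor (1 : Fin n → Matrix (Fin N) (Fin N) ℂ) = 1 := by
  ext f g
  simp only [pureTensor, Pi.one_apply, Matrix.one_apply, Finset.prod_boole, funext_iff,
    Finset.mem_univ, true_implies]

lemma permOp_mul_pureTensor_mul (σ : Perm (Fin n)) (W : Fin n → Matrix (Fin N) (Fin N) ℂ) :
    permOp N n σ * pureTensor W * permOp N n σ⁻¹ = pureTensor (W ∘ (σ⁻¹ : Perm (Fin n))) := by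
  ext f g
  rw [mul_permOp_apply, permOp_mul_apply, inv_inv]
  exact Fintype.prod_equiv σ _ _ fun i => by simp

lemma glAct_eq_sum (X : Matrix (Fin N) (Fin N) ℂ) :
    glAct N n X = ∑ a, pureTensor (Function.update 1 a X) := by
  unfold glAct
  refine Finset.sum_congr rfl fun a _ => ?_
  refine Matrix.ext fun f g => ?_
  change X (f a) (g a) * _ = ∏ i, Function.update (1 : Fin n → Matrix _ _ ℂ) a X i (f i) (g i)
  rw [← Finset.mul_prod_erase _ _ (Finset.mem_univ a),
    ← Finset.mul_prod_erase _ (fun i => Function.update (1 : Fin n → Matrix _ _ ℂ) a X i (f i)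
      (g i)) (Finset.mem_univ a), Function.update_self, if_neg (by simp), one_mul]
  congr 1
  refine Finset.prod_congr rfl fun i hi => ?_
  have hi : i ≠ a := Finset.ne_of_mem_erase hi
  rw [if_pos hi, Function.update_of_ne hi, Pi.one_apply, Matrix.one_apply]

lemma permOp_mul_glAct (σ : Perm (Fin n)) (X : Matrix (Fin N) (Fin N) ℂ) :
    permOp N n σ * glAct N n X = glAct N n X * permOp N n σ := by
  have h : permOp N n σ * glAct N n X * permOp N n σ⁻¹ = glAct N n X := by
    simp only [glAct_eq_sum, Finset.mul_sum, Finset.sum_mul, permOp_mul_pureTensor_mul]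
    refine Fintype.sum_equiv σ _ _ fun a => ?_
    congr 1
    ext i : 1
    simp only [Function.comp_apply, Function.update_apply, Pi.one_apply, Perm.inv_eq_iff_eq]
  nth_rewrite 2 [← h]
  rw [mul_assoc _ _ (permOp N n σ), ← map_mul, inv_mul_cancel, map_one, mul_one]

lemma commute_glAct {z : EndT N n} (hz : z ∈ permAlg (permOp N n))
    (X : Matrix (Fin N) (Fin N) ℂ) : z * glAct N n X = glAct N n X * z := by
  rw [mem_permAlg_iff] at hz
  induction hz using Submodule.span_induction with
  | mem x hx =>
    obtain ⟨σ, rfl⟩ := hx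
    exact permOp_mul_glAct σ X
  | zero => simp
  | add x y hx hy ihx ihy => rw [add_mul, mul_add, ihx, ihy]
  | smul k x hx ihx => rw [smul_mul_assoc, mul_smul_comm, ihx]

/-- The symmetrization of a pure tensor. -/
def symTensor (W : Fin n → Matrix (Fin N) (Fin N) ℂ) : EndT N n :=
  ∑ σ : Perm (Fin n), pureTensor (W ∘ σ)

lemma symTensor_comp (W : Fin n → Matrix (Fin N) (Fin N) ℂ) (τ : Perm (Fin n)) :
    symTensor (W ∘ τ) = symTensor W :=
  Fintype.sum_equiv (Equiv.mulLeft τ) _ _ fun σ => by simp [Function.comp_assoc]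

lemma symTensor_mul_glAct (W : Fin n → Matrix (Fin N) (Fin N) ℂ) (X : Matrix (Fin N) (Fin N) ℂ) :
    symTensor W * glAct N n X = ∑ b, symTensor (Function.update W b (W b * X)) := by
  simp only [symTensor]
  rw [glAct_eq_sum, Finset.sum_mul_sum, Finset.sum_comm (γ := Fin n)]
  refine Finset.sum_congr rfl fun σ _ => ?_
  refine Fintype.sum_equiv σ _ _ fun a => ?_
  rw [pureTensor_mul]
  congr 1
  ext i : 1
  by_cases h : i = a
  · subst h; simp
  · have : σ i ≠ σ a := fun h' => h (σ.injective h')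
    simp [h, this]

/-- A subspace invariant under the diagonal action of `gl(V)` is invariant under the
symmetrizations of all pure tensors. -/
lemma symTensor_mulVec_mem {U : Submodule ℂ ((Fin n → Fin N) → ℂ)}
    (hU : ∀ X : Matrix (Fin N) (Fin N) ℂ, ∀ x ∈ U, (glAct N n X).mulVec x ∈ U)
    (W : Fin n → Matrix (Fin N) (Fin N) ℂ) {x : (Fin n → Fin N) → ℂ} (hx : x ∈ U) :
    (symTensor W).mulVec x ∈ U := by
  classical
  obtain ⟨k, hk⟩ : ∃ k, (Finset.univ.filter fun i => W i ≠ 1).card ≤ k := ⟨_, le_rfl⟩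
  induction k generalizing W x with
  | zero =>
    have hW : W = 1 := by
      funext i
      by_contra h
      have : i ∈ Finset.univ.filter fun i => W i ≠ 1 := by simpa using h
      simp [Finset.card_eq_zero.1 (Nat.le_zero.1 hk)] at this
    have e : symTensor W = ((Fintype.card (Perm (Fin n)) : ℕ) : ℂ) • (1 : EndT N n) := by
      have (σ : Perm (Fin n)) : pureTensor (W ∘ σ) = (1 : EndT N n) := by
        rw [hW, ← pureTensor_one]
        rfl
      simp only [symTensor, this, Finset.sum_const, Finset.card_univ, Nat.cast_smul_eq_nsmul]
    rw [e, Matrix.smul_mulVec, Matrix.one_mulVec]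
    exact U.smul_mem _ hx
  | succ k ih =>
    rcases (Finset.univ.filter fun i => W i ≠ 1).eq_empty_or_nonempty with h0 | ⟨a, ha⟩
    · exact ih W hx (by simp [h0])
    set W' := Function.update W a 1 with hW'
    have hsupp : (Finset.univ.filter fun i => W' i ≠ 1) =
        (Finset.univ.filter fun i => W i ≠ 1).erase a := by
      ext i
      by_cases h : i = a <;> simp [hW', h]
    have hcard : (Finset.univ.filter fun i => W' i ≠ 1).card ≤ k := by
      rw [hsupp, Finset.card_erase_of_mem ha]
      omega
    have hmem := ih W' (hU (W a) x hx) hcard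
    rw [Matrix.mulVec_mulVec, symTensor_mul_glAct,
      ← Finset.sum_filter_add_sum_filter_not _ (fun i => W' i ≠ 1), Matrix.add_mulVec,
      Matrix.sum_mulVec] at hmem
    have h1 : ∑ b with W' b ≠ 1,
        (symTensor (Function.update W' b (W' b * W a))).mulVec x ∈ U := by
      refine U.sum_mem fun b hb => ?_
      refine ih _ hx ((Finset.card_le_card fun i hi => ?_).trans hcard)
      by_cases h : i = b
      · rwa [h]
      · simpa [h] using hi
    have h2 : ∑ b with ¬ (W' b ≠ 1), symTensor (Function.update W' b (W' b * W a)) =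
        (((Finset.univ.filter fun b => ¬ (W' b ≠ 1)).card : ℕ) : ℂ) • symTensor W := by
      rw [Nat.cast_smul_eq_nsmul]
      refine Finset.sum_eq_card_nsmul fun b hb => ?_
      rw [Finset.mem_filter, not_not] at hb
      rw [hb.2, one_mul, ← symTensor_comp W (swap a b)]
      congr 1
      ext i : 1
      simp only [Function.comp_apply, swap_apply_def, hW', Function.update_apply] at hb ⊢
      grind
    rw [h2, Matrix.smul_mulVec] at hmem
    have h3 := (U.add_mem_iff_right h1).1 hmem
    refine (U.smul_mem_iff ?_).1 h3
    rw [Nat.cast_ne_zero]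
    refine (Finset.card_pos.2 ⟨a, ?_⟩).ne'
    simp [hW']

lemma exists_pureTensor_single (f g : Fin n → Fin N) :
    Matrix.single f g (1 : ℂ) = pureTensor fun i => Matrix.single (f i) (g i) 1 := by
  ext f' g'
  simp only [pureTensor, Matrix.single_apply, Finset.prod_boole, funext_iff, Finset.mem_univ,
    true_implies, forall_and]

/-- A subspace invariant under the diagonal action of `gl(V)` is invariant under the commutant of
the symmetric group. -/
lemma sum_conj_mulVec_mem {U : Submodule ℂ ((Fin n → Fin N) → ℂ)}
    (hU : ∀ X : Matrix (Fin N) (Fin N) ℂ, ∀ x ∈ U, (glAct N n X).mulVec x ∈ U)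
    (M : EndT N n) {x : (Fin n → Fin N) → ℂ} (hx : x ∈ U) :
    (∑ σ : Perm (Fin n), permOp N n σ * M * permOp N n σ⁻¹).mulVec x ∈ U := by
  induction M using Matrix.induction_on' with
  | h_zero => simp
  | h_add p q hp hq =>
    simp only [mul_add, add_mul, Finset.sum_add_distrib, Matrix.add_mulVec]
    exact U.add_mem hp hq
  | h_std_basis f g k =>
    have e : Matrix.single f g k = k • pureTensor fun i => Matrix.single (f i) (g i) (1 : ℂ) := by
      rw [← exists_pureTensor_single, Matrix.smul_single, smul_eq_mul, mul_one]
    simp only [e, mul_smul_comm, smul_mul_assoc, permOp_mul_pureTensor_mul, ← Finset.smul_sum,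
      Matrix.smul_mulVec]
    refine U.smul_mem _ ?_
    convert symTensor_mulVec_mem hU (fun i => Matrix.single (f i) (g i) (1 : ℂ)) hx using 2
    exact Fintype.sum_equiv (Equiv.inv _) _ _ fun σ => rfl

lemma fusionProd_eq_prod {ι E : Type*} [LinearOrder ι] [Ring E] [Algebra ℂ E] {P : Perm ι →* E}
    {c : ι → ℂ} {L : List ι} (hL : L.Pairwise (· < ·)) :
    fusionProd P c L = ((L.flatMap fun i => (L.filter fun j => decide (i < j)).map
      fun j => (i, j)).map fun p => ybFactor P c p.1 p.2).prod := by
  induction L with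
  | nil => rfl
  | cons a L ih =>
    rw [List.pairwise_cons] at hL
    have h1 : (a :: L).filter (fun j => decide (a < j)) = L := by
      rw [List.filter_cons_of_neg (by simp), List.filter_eq_self]
      simpa using hL.1
    have h2 : L.flatMap (fun i => ((a :: L).filter fun j => decide (i < j)).map fun j => (i, j)) =
        L.flatMap fun i => (L.filter fun j => decide (i < j)).map fun j => (i, j) := by
      refine List.flatMap_congr fun i hi => ?_
      rw [List.filter_cons_of_neg (by simpa using (hL.1 i hi).le)]
    rw [fusionProd, ih hL.2, List.flatMap_cons, h1, h2, List.map_append, List.prod_append,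
      List.map_map]
    rfl

lemma FT_eq_fusionProd (T : Fin n → ℕ × ℕ) :
    FT N T = fusionProd (permOp N n) (content T) (List.finRange n) := by
  rw [fusionProd_eq_prod (List.pairwise_lt_finRange n), FT, lexPairs]
  simp only [flipOp_eq_permOp, ybFactor]

lemma star_content (T : Fin n → ℕ × ℕ) (i : Fin n) : star (content T i) = content T i := by
  simp [content]

open scoped ComplexOrder in
lemma mul_self_ne_zero_of_star_eq {F : EndT N n} (hs : star F = F) (h0 : F ≠ 0) : F * F ≠ 0 := by
  nth_rewrite 2 [← hs]
  rwa [Matrix.star_eq_conjTranspose, Ne, Matrix.self_mul_conjTranspose_eq_zero]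

open scoped ComplexOrder in
/-- The image of a Hermitian multiple of a primitive idempotent of the group algebra of the
symmetric group is an irreducible `gl(V)`-module. -/
lemma IsPrimitive.eq_bot_or_eq_range {F : EndT N n} (hp : IsPrimitive (permOp N n) F)
    (hs : star F = F) {U : Submodule ℂ ((Fin n → Fin N) → ℂ)}
    (hUF : U ≤ LinearMap.range F.mulVecLin)
    (hU : ∀ X : Matrix (Fin N) (Fin N) ℂ, ∀ x ∈ U, (glAct N n X).mulVec x ∈ U) :
    U = ⊥ ∨ U = LinearMap.range F.mulVecLin := by
  rw [or_iff_not_imp_left]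
  intro hbot
  obtain ⟨u, huU, hu0⟩ := Submodule.exists_mem_ne_zero_of_ne_bot hbot
  have hF0 : F ≠ 0 := by
    rintro rfl
    obtain ⟨w, hw⟩ := hUF huU
    exact hu0 (by simpa using hw.symm)
  choose τ hτ using fun σ => hp (permOp N n σ) (map_mem_permAlg σ)
  have hFF : F * F = τ 1 • F := by simpa using hτ 1
  have hτ1 : τ 1 ≠ 0 := by
    intro h
    rw [h, zero_smul] at hFF
    exact mul_self_ne_zero_of_star_eq hs hF0 hFF
  have hFU {x : (Fin n → Fin N) → ℂ} (hx : x ∈ U) : F.mulVec x = τ 1 • x := by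
    obtain ⟨w, rfl⟩ := hUF hx
    rw [Matrix.mulVecLin_apply, Matrix.mulVec_mulVec, hFF, Matrix.smul_mulVec]
  have hτs (σ : Perm (Fin n)) : τ σ⁻¹ = star (τ σ) := by
    have h := congrArg star (hτ σ)
    rw [star_mul, star_mul, star_smul, hs, star_permOp, ← mul_assoc, hτ] at h
    exact smul_left_injective ℂ hF0 h
  have hS : ∑ σ, τ σ * τ σ⁻¹ ≠ 0 := by
    have e : ∑ σ, τ σ * τ σ⁻¹ = ((∑ σ, Complex.normSq (τ σ) : ℝ) : ℂ) := by
      push_cast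
      exact Finset.sum_congr rfl fun σ _ => by rw [hτs]; exact Complex.mul_conj _
    rw [e, Complex.ofReal_ne_zero]
    exact (Finset.sum_pos' (fun σ _ => Complex.normSq_nonneg _)
      ⟨1, Finset.mem_univ _, Complex.normSq_pos.2 hτ1⟩).ne'
  refine le_antisymm hUF ?_
  rintro _ ⟨z, rfl⟩
  set K := Matrix.vecMulVec z (star u)
  set b := ∑ σ : Perm (Fin n), permOp N n σ * (F * K * F) * permOp N n σ⁻¹
  have hbu : b.mulVec u ∈ U := sum_conj_mulVec_mem hU _ huU
  have e1 : F * b * F = (∑ σ, τ σ * τ σ⁻¹) • (F * K * F) := by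
    simp only [b, Finset.mul_sum, Finset.sum_mul, Finset.sum_smul]
    refine Finset.sum_congr rfl fun σ _ => ?_
    calc _ = (F * permOp N n σ * F) * K * (F * permOp N n σ⁻¹ * F) := by simp only [mul_assoc]
      _ = _ := by rw [hτ, hτ, smul_mul_assoc, smul_mul_assoc, mul_smul_comm, smul_smul]
  have e2 : (F * b * F).mulVec u = (τ 1 * τ 1) • b.mulVec u := by
    rw [← Matrix.mulVec_mulVec, hFU huU, Matrix.mulVec_smul, ← Matrix.mulVec_mulVec, hFU hbu,
      smul_smul]
  have e3 : (F * K * F).mulVec u = (τ 1 * (star u ⬝ᵥ u)) • F.mulVec z := by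
    rw [← Matrix.mulVec_mulVec, hFU huU, Matrix.mulVec_smul, ← Matrix.mulVec_mulVec,
      Matrix.vecMulVec_mulVec, mul_smul]
    simp [Matrix.mulVec_smul]
  rw [e1, Matrix.smul_mulVec, e3, smul_smul] at e2
  have hu : star u ⬝ᵥ u ≠ 0 := by rwa [Ne, dotProduct_star_self_eq_zero]
  refine (U.smul_mem_iff (mul_ne_zero hS (mul_ne_zero hτ1 hu))).1 ?_
  rw [Matrix.mulVecLin_apply, e2]
  exact U.smul_mem _ hbu

lemma glAct_mulVec_mem_range {F : EndT N n} (hF : F ∈ permAlg (permOp N n))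
    (X : Matrix (Fin N) (Fin N) ℂ) {x : (Fin n → Fin N) → ℂ}
    (hx : x ∈ LinearMap.range F.mulVecLin) :
    (glAct N n X).mulVec x ∈ LinearMap.range F.mulVecLin := by
  obtain ⟨w, rfl⟩ := hx
  refine ⟨(glAct N n X).mulVec w, ?_⟩
  simp only [Matrix.mulVecLin_apply, Matrix.mulVec_mulVec, commute_glAct hF]

/-- Schur's lemma for the images of two primitive elements. -/
lemma exists_isomorphism_of_mul_mul_ne_zero {F F' Z : EndT N n} (hF : F ∈ permAlg (permOp N n))
    (hF' : F' ∈ permAlg (permOp N n)) (hZ : Z ∈ permAlg (permOp N n))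
    (hp : IsPrimitive (permOp N n) F) (hp' : IsPrimitive (permOp N n) F') (hs : star F = F)
    (hs' : star F' = F') (h0 : F' * Z * F ≠ 0) :
    ∃ g : ((Fin n → Fin N) → ℂ) →ₗ[ℂ] ((Fin n → Fin N) → ℂ),
      Submodule.map g (LinearMap.range F.mulVecLin) = LinearMap.range F'.mulVecLin ∧
      (∀ x ∈ LinearMap.range F.mulVecLin, g x = 0 → x = 0) ∧
      ∀ X : Matrix (Fin N) (Fin N) ℂ, ∀ x ∈ LinearMap.range F.mulVecLin,
        g ((glAct N n X).mulVec x) = (glAct N n X).mulVec (g x) := by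
  have hg (X : Matrix (Fin N) (Fin N) ℂ) (x : (Fin n → Fin N) → ℂ) :
      (F' * Z).mulVecLin ((glAct N n X).mulVec x) =
        (glAct N n X).mulVec ((F' * Z).mulVecLin x) := by
    simp only [Matrix.mulVecLin_apply, Matrix.mulVec_mulVec, commute_glAct (mul_mem hF' hZ)]
  have hne
      (hW : ∀ x ∈ LinearMap.range F.mulVecLin, (F' * Z).mulVecLin x = 0) : False := by
    refine h0 (Matrix.mulVec_injective (funext fun x => ?_))
    have := hW _ ⟨x, rfl⟩
    simpa [Matrix.mulVec_mulVec, mul_assoc] using this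
  refine ⟨(F' * Z).mulVecLin, ?_, ?_, fun X x _ => hg X x⟩
  · refine (hp'.eq_bot_or_eq_range hs' (U := Submodule.map (F' * Z).mulVecLin _) ?_ ?_).resolve_left
      fun h => hne fun x hx => ?_
    · rintro _ ⟨x, -, rfl⟩
      exact ⟨Z.mulVec x, by simp [Matrix.mulVec_mulVec]⟩
    · rintro X _ ⟨x, hx, rfl⟩
      exact ⟨(glAct N n X).mulVec x, glAct_mulVec_mem_range hF X hx, hg X x⟩
    · exact (Submodule.mem_bot ℂ).1 (h ▸ Submodule.mem_map_of_mem hx)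
  · intro x hx hgx
    rcases hp.eq_bot_or_eq_range hs (U := LinearMap.range F.mulVecLin ⊓
      LinearMap.ker (F' * Z).mulVecLin) inf_le_left (fun X y hy =>
        ⟨glAct_mulVec_mem_range hF X hy.1, by
          rw [SetLike.mem_coe, LinearMap.mem_ker, hg, LinearMap.mem_ker.1 hy.2,
            Matrix.mulVec_zero]⟩) with h | h
    · exact (Submodule.mem_bot ℂ).1 (h ▸ ⟨hx, hgx⟩)
    · exact (hne fun y hy => (inf_eq_left.1 h hy : _)).elim

lemma consecutive_of_pairwise {ι : Type*} {c : ι → ℂ} (f : ι → ℕ) {L : List ι} (s : ℕ)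
    (hc : ∀ i ∈ L, c i = f i) (hp : L.Pairwise fun i j => f i < f j) (hs : ∀ i ∈ L, s ≤ f i)
    (hd : ∀ k, s ≤ k → (∃ i ∈ L, k ≤ f i) → ∃ i ∈ L, f i = k) : Consecutive c s L := by
  induction L generalizing s with
  | nil => trivial
  | cons a L ih =>
    rw [List.pairwise_cons] at hp
    have ha : f a = s := by
      obtain ⟨i, hi, e⟩ := hd s le_rfl ⟨a, by simp, hs a (by simp)⟩
      rcases List.mem_cons.1 hi with rfl | hi
      · exact e
      · have := hp.1 i hi
        have := hs a (by simp)
        omega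
    refine ⟨by rw [hc a (by simp), ha], ?_⟩
    rw [← Nat.cast_succ]
    refine ih (s + 1) (fun i hi => hc i (by simp [hi])) hp.2 (fun i hi => ha ▸ hp.1 i hi) ?_
    rintro k hk ⟨i, hi, hik⟩
    obtain ⟨j, hj, e⟩ := hd k (by omega) ⟨i, by simp [hi], hik⟩
    refine ⟨j, (List.mem_cons.1 hj).resolve_left ?_, e⟩
    rintro rfl
    omega

section Tableau

variable {T : Fin n → ℕ × ℕ}

lemma IsStandardTableau.injective (hT : IsStandardTableau n T) : Function.Injective T :=
  fun i j h => le_antisymm (hT.2 i j (h ▸ le_rfl) (h ▸ le_rfl))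
    (hT.2 j i (h ▸ le_rfl) (h ▸ le_rfl))

lemma IsStandardTableau.apply_zero {m : ℕ} {T : Fin (m + 1) → ℕ × ℕ}
    (hT : IsStandardTableau (m + 1) T) : T 0 = (0, 0) := by
  obtain ⟨i, hi⟩ := hT.1 (T 0) ⟨0, rfl⟩ (0, 0) (Nat.zero_le _) (Nat.zero_le _)
  have : i ≤ 0 := hT.2 i 0 (by simp [hi]) (by simp [hi])
  rwa [Fin.le_zero_iff.1 this] at hi

/-- A diagram with pairwise distinct contents is a hook. -/
lemma IsStandardTableau.eq_zero_or_eq_zero (hT : IsStandardTableau n T)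
    (hc : Function.Injective (content T)) (i : Fin n) : (T i).1 = 0 ∨ (T i).2 = 0 := by
  by_contra! h
  obtain ⟨a, ha⟩ := hT.1 (T i) ⟨i, rfl⟩ (0, 0) (Nat.zero_le _) (Nat.zero_le _)
  obtain ⟨b, hb⟩ := hT.1 (T i) ⟨i, rfl⟩ (1, 1) (Nat.one_le_iff_ne_zero.2 h.1)
    (Nat.one_le_iff_ne_zero.2 h.2)
  have : a = b := hc (by simp [content, ha, hb])
  rw [← this, ha] at hb
  simp at hb

/-- The entries of the first row of a tableau. -/
def firstRow (T : Fin n → ℕ × ℕ) : List (Fin n) := (List.finRange n).filter fun i => (T i).1 = 0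

/-- The entries of the first column of a tableau. -/
def firstCol (T : Fin n → ℕ × ℕ) : List (Fin n) := (List.finRange n).filter fun i => (T i).2 = 0

lemma mem_firstRow {i : Fin n} : i ∈ firstRow T ↔ (T i).1 = 0 := by simp [firstRow]

lemma mem_firstCol {i : Fin n} : i ∈ firstCol T ↔ (T i).2 = 0 := by simp [firstCol]

lemma nodup_firstRow : (firstRow T).Nodup := (List.nodup_finRange n).filter _

lemma nodup_firstCol : (firstCol T).Nodup := (List.nodup_finRange n).filter _

lemma IsStandardTableau.pairwise_filter_row {ρ : Perm (Fin n)} (hT : IsStandardTableau n (T ∘ ρ)) :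
    (((List.finRange n).map ρ).filter fun i => (T i).1 = 0).Pairwise
      fun i j => (T i).2 < (T j).2 := by
  rw [List.pairwise_filter, List.pairwise_map]
  refine (List.pairwise_lt_finRange n).imp fun {i j} hij hi hj => ?_
  by_contra! h
  refine hij.not_ge (hT.2 j i ?_ h)
  simp_all

lemma IsStandardTableau.pairwise_filter_col {ρ : Perm (Fin n)} (hT : IsStandardTableau n (T ∘ ρ)) :
    (((List.finRange n).map ρ).filter fun i => (T i).2 = 0).Pairwise
      fun i j => (T i).1 < (T j).1 := by
  rw [List.pairwise_filter, List.pairwise_map]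
  refine (List.pairwise_lt_finRange n).imp fun {i j} hij hi hj => ?_
  by_contra! h
  refine hij.not_ge (hT.2 j i h ?_)
  simp_all

lemma IsStandardTableau.pairwise_firstRow (hT : IsStandardTableau n T) :
    (firstRow T).Pairwise fun i j => (T i).2 < (T j).2 := by
  simpa [firstRow] using IsStandardTableau.pairwise_filter_row (ρ := 1) hT

lemma IsStandardTableau.pairwise_firstCol (hT : IsStandardTableau n T) :
    (firstCol T).Pairwise fun i j => (T i).1 < (T j).1 := by
  simpa [firstCol] using IsStandardTableau.pairwise_filter_col (ρ := 1) hT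

lemma IsStandardTableau.filter_row_eq {ρ : Perm (Fin n)} (hT : IsStandardTableau n T)
    (hρ : IsStandardTableau n (T ∘ ρ)) :
    ((List.finRange n).map ρ).filter (fun i => (T i).1 = 0) = firstRow T :=
  List.Perm.eq_of_pairwise (fun _ _ _ _ hab hba => (lt_asymm hab hba).elim)
    hρ.pairwise_filter_row hT.pairwise_firstRow ((Equiv.Perm.map_finRange_perm ρ).filter _)

lemma IsStandardTableau.filter_col_eq {ρ : Perm (Fin n)} (hT : IsStandardTableau n T)
    (hρ : IsStandardTableau n (T ∘ ρ)) :
    ((List.finRange n).map ρ).filter (fun i => (T i).2 = 0) = firstCol T :=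
  List.Perm.eq_of_pairwise (fun _ _ _ _ hab hba => (lt_asymm hab hba).elim)
    hρ.pairwise_filter_col hT.pairwise_firstCol ((Equiv.Perm.map_finRange_perm ρ).filter _)

lemma IsStandardTableau.consecutive_firstRow (hT : IsStandardTableau n T) :
    Consecutive (content T) 0 (firstRow T) := by
  have h := consecutive_of_pairwise (c := content T) (fun i => (T i).2) 0
    (fun i hi => by simp [content, mem_firstRow.1 hi]) hT.pairwise_firstRow
    (fun i _ => Nat.zero_le _) ?_
  · simpa using h
  · rintro k - ⟨i, -, hik⟩
    obtain ⟨j, hj⟩ := hT.1 (T i) ⟨i, rfl⟩ (0, k) (Nat.zero_le _) hik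
    exact ⟨j, mem_firstRow.2 (by rw [hj]), by rw [hj]⟩

lemma IsStandardTableau.consecutive_firstCol (hT : IsStandardTableau n T) :
    Consecutive (-content T) 0 (firstCol T) := by
  have h := consecutive_of_pairwise (c := -content T) (fun i => (T i).1) 0
    (fun i hi => by simp [content, mem_firstCol.1 hi]) hT.pairwise_firstCol
    (fun i _ => Nat.zero_le _) ?_
  · simpa using h
  · rintro k - ⟨i, -, hik⟩
    obtain ⟨j, hj⟩ := hT.1 (T i) ⟨i, rfl⟩ (k, 0) hik (Nat.zero_le _)
    exact ⟨j, mem_firstCol.2 (by rw [hj]), by rw [hj]⟩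

/-- The product of the row symmetrizer and the column antisymmetrizer of a hook tableau. -/
def hookSymmetrizer (N : ℕ) (T : Fin n → ℕ × ℕ) : EndT N n :=
  fusionProd (permOp N n) (content T) (firstRow T) *
    fusionProd (permOp N n) (content T) (firstCol T)

lemma hookSymmetrizer_mem_permAlg : hookSymmetrizer N T ∈ permAlg (permOp N n) :=
  mul_mem (fusionProd_mem_permAlg _) (fusionProd_mem_permAlg _)

lemma isPrimitive_hookSymmetrizer (hT : IsStandardTableau n T)
    (hc : Function.Injective (content T)) : IsPrimitive (permOp N n) (hookSymmetrizer N T) := by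
  rcases n with _ | m
  · intro z hz
    have hr : Set.range (permOp N 0) = {1} := by
      ext x
      simp [Subsingleton.elim _ (1 : Perm (Fin 0)), eq_comm]
    have hq : hookSymmetrizer N T = 1 := by simp [hookSymmetrizer, firstRow, firstCol, fusionProd]
    rw [mem_permAlg_iff, hr, Submodule.mem_span_singleton] at hz
    obtain ⟨k, rfl⟩ := hz
    exact ⟨k, by simp [hq]⟩
  · refine isPrimitive_symmetrizer (o := 0) (fun x => ?_) (mem_firstRow.2 ?_) (mem_firstCol.2 ?_)
      (fusionProd_mem_permAlg _) (fusionProd_mem_permAlg _)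
      (fun i hi j hj => consecutive_mul_map_swap star_permOp (star_content T) hc nodup_firstRow
        hT.consecutive_firstRow hi hj)
      (fun i hi j hj hij => map_swap_mul_consecutive nodup_firstCol hT.consecutive_firstCol
        hi hj hij)
    · rw [mem_firstRow, mem_firstCol]
      exact hT.eq_zero_or_eq_zero hc x
    · rw [hT.apply_zero]
    · rw [hT.apply_zero]

lemma hookSymmetrizer_ne_zero (hT : IsStandardTableau n T) (hrow : ∀ i, (T i).1 < N)
    (hc : Function.Injective (content T)) : hookSymmetrizer N T ≠ 0 := by
  let f : Fin n → Fin N := fun i => ⟨(T i).1, hrow i⟩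
  refine fusionProd_mul_fusionProd_ne_zero star_permOp (star_content T) hc nodup_firstRow
    nodup_firstCol hT.consecutive_firstRow hT.consecutive_firstCol
    (b := Matrix.single f f (1 : ℂ)) ?_ ?_ ?_
  · rw [Matrix.star_eq_conjTranspose, Matrix.conjTranspose_single, star_one]
  · intro σ hσ
    have hf : f ∘ σ = f := by
      funext i
      refine Fin.ext ?_
      change (T (σ i)).1 = (T i).1
      by_cases hi : i ∈ firstRow T
      · have : σ i ∈ firstRow T := by
          by_contra h
          rw [σ.injective (hσ _ h)] at h
          exact h hi
        rw [mem_firstRow.1 hi, mem_firstRow.1 this]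
      · rw [hσ i hi]
    ext f' g
    have : f = f' ∘ σ ↔ f = f' := by
      nth_rewrite 1 [← hf]
      exact σ.surjective.injective_comp_right.eq_iff
    simp only [permOp_mul_apply, Matrix.single_apply, this]
  · intro h
    have h1 := congrFun (congrFun h f) f
    rw [Matrix.single_mul_apply_same, one_mul, Matrix.sum_apply,
      Finset.sum_eq_single_of_mem (1 : Perm (Fin n)) (by simp)] at h1
    · simp at h1
    · intro σ hσ hσ1
      simp only [Finset.mem_filter, Finset.mem_univ, true_and] at hσ
      have : f ∘ σ ≠ f := by
        refine fun hf => hσ1 (Equiv.ext fun i => ?_)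
        by_cases hi : i ∈ firstCol T
        · have hσi : σ i ∈ firstCol T := by
            by_contra h
            rw [σ.injective (hσ _ h)] at h
            exact h hi
          refine hT.injective (Prod.ext (Fin.ext_iff.1 (congrFun hf i)) ?_)
          rw [mem_firstCol.1 hσi, Perm.one_apply, mem_firstCol.1 hi]
        · exact hσ i hi
      change ((Perm.sign σ : ℤ) : ℂ) • permOp N n σ f f = 0
      rw [permOp_apply, if_neg this, smul_zero]

lemma permEquiv_FT (hT : IsStandardTableau n T) (hc : Function.Injective (content T))
    {ρ : Perm (Fin n)} (hρ : IsStandardTableau n (T ∘ ρ)) :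
    PermEquiv (permOp N n) (FT N (T ∘ ρ)) (hookSymmetrizer N T) := by
  have e : FT N (T ∘ ρ) = permOp N n ρ⁻¹ *
      fusionProd (permOp N n) (content T) ((List.finRange n).map ρ) * permOp N n ρ := by
    have h : permOp N n ρ⁻¹ * permOp N n ρ = 1 := by rw [← map_mul, inv_mul_cancel, map_one]
    rw [fusionProd_map, FT_eq_fusionProd]
    simp only [mul_assoc]
    rw [h, mul_one, ← mul_assoc, h, one_mul]
    rfl
  have hu (σ : Perm (Fin n)) : IsUnit (permOp N n σ) := (Group.isUnit σ).map _
  refine PermEquiv.trans ⟨_, map_mem_permAlg _, _, map_mem_permAlg _, hu _, hu _, e⟩ ?_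
  rw [hookSymmetrizer, ← hT.filter_row_eq hρ, ← hT.filter_col_eq hρ]
  rcases n with _ | m
  · simpa [fusionProd] using PermEquiv.refl _
  have hρ0 : ρ 0 = 0 := hT.injective (hρ.apply_zero.trans hT.apply_zero.symm)
  have hnd : ((List.finRange (m + 1)).map ρ).Nodup := (List.nodup_finRange _).map ρ.injective
  rw [List.finRange_succ, List.map_cons, hρ0] at hnd ⊢
  set L := ((List.finRange m).map Fin.succ).map ρ
  have h0 (i : Fin (m + 1)) (hi : i ∈ L) : T i ≠ (0, 0) := by
    rw [← hT.apply_zero]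
    rintro h
    exact (List.nodup_cons.1 hnd).1 (hT.injective h ▸ hi)
  rw [List.filter_cons_of_pos (by simp [hT.apply_zero]),
    List.filter_cons_of_pos (by simp [hT.apply_zero])]
  have hcol : L.filter (fun i => decide ((T i).2 = 0)) =
      L.filter fun i => decide (¬ (T i).1 = 0) := by
    refine List.filter_congr fun i hi => ?_
    rw [decide_eq_decide]
    have := h0 i hi
    have := hT.eq_zero_or_eq_zero hc i
    rw [Ne, Prod.ext_iff] at *
    tauto
  rw [hcol]
  refine permEquiv_fusionProd_hook hc (fun i => (T i).1 = 0) hnd fun a ha b hb ha' hb' => ?_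
  have hb2 := (hT.eq_zero_or_eq_zero hc b).resolve_left hb'
  have ha2 : (T a).2 ≠ 0 := fun h => h0 a ha (Prod.ext ha' h)
  have e : content T a - content T b = (((T a).2 + (T b).1 : ℕ) : ℂ) := by
    simp [content, ha', hb2]
  rw [e]
  constructor
  · norm_cast
    omega
  · intro h
    have := congrArg Complex.re h
    simp at this
    have h1 : (0 : ℝ) ≤ (T a).2 := Nat.cast_nonneg _
    have h2 : (0 : ℝ) ≤ (T b).1 := Nat.cast_nonneg _
    linarith

lemma FT_ne_zero_of_permEquiv {x q : EndT N n} (h : PermEquiv (permOp N n) x q) (hq : q ≠ 0) :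
    x ≠ 0 := by
  obtain ⟨u, -, v, -, hu, hv, rfl⟩ := h
  rwa [Ne, hv.mul_left_eq_zero, hu.mul_right_eq_zero]

lemma star_FT (hc : Function.Injective (content T)) : star (FT N T) = FT N T := by
  rw [FT_eq_fusionProd,
    star_fusionProd star_permOp (star_content T) hc (List.nodup_finRange n)]

lemma FT_mem_permAlg : FT N T ∈ permAlg (permOp N n) := by
  rw [FT_eq_fusionProd]
  exact fusionProd_mem_permAlg _

lemma isPrimitive_FT (hT : IsStandardTableau n T) (hc : Function.Injective (content T)) :
    IsPrimitive (permOp N n) (FT N T) := by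
  obtain ⟨u, hu, v, hv, -, -, e⟩ := permEquiv_FT (N := N) (ρ := 1) hT hc hT
  rw [Perm.coe_one, Function.comp_id] at e
  rw [e]
  exact (isPrimitive_hookSymmetrizer hT hc).mul_mul hu hv

lemma FT_ne_zero (hT : IsStandardTableau n T) (hrow : ∀ i, (T i).1 < N)
    (hc : Function.Injective (content T)) : FT N T ≠ 0 :=
  FT_ne_zero_of_permEquiv (permEquiv_FT (ρ := 1) hT hc hT) (hookSymmetrizer_ne_zero hT hrow hc)

end Tableau

end Tensor

/-- For a standard Young tableau `T` with `n` entries, at most `N` rows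
and pairwise distinct classical contents, the image `W_T` of `F(T)` is a nonzero subspace
of `V^{⊗n}`, invariant under the diagonal action of `gl(V)`, and irreducible as a
`gl(V)`-module; moreover for any other standard Young tableau `T'` of the same shape
(with pairwise distinct contents), `W_T` and `W_{T'}` are isomorphic `gl(V)`-modules. -/
theorem tableau_subspace_irreducible
    (N n : ℕ) (T : Fin n → ℕ × ℕ)
    (hT : IsStandardTableau n T)
    (hrow : ∀ i, (T i).1 < N)
    (hcc : ∀ i j : Fin n, i ≠ j → content T i ≠ content T j) :
    LinearMap.range (Matrix.mulVecLin (FT N T)) ≠ ⊥ ∧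
    (∀ X : Matrix (Fin N) (Fin N) ℂ,
      ∀ x ∈ LinearMap.range (Matrix.mulVecLin (FT N T)),
        (glAct N n X).mulVec x ∈ LinearMap.range (Matrix.mulVecLin (FT N T))) ∧
    (∀ U : Submodule ℂ ((Fin n → Fin N) → ℂ),
      U ≤ LinearMap.range (Matrix.mulVecLin (FT N T)) →
      (∀ X : Matrix (Fin N) (Fin N) ℂ, ∀ x ∈ U, (glAct N n X).mulVec x ∈ U) →
      U = ⊥ ∨ U = LinearMap.range (Matrix.mulVecLin (FT N T))) ∧
    (∀ T' : Fin n → ℕ × ℕ, IsStandardTableau n T' → (∀ i, (T' i).1 < N) →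
      (∀ i j : Fin n, i ≠ j → content T' i ≠ content T' j) →
      Set.range T' = Set.range T →
      ∃ g : ((Fin n → Fin N) → ℂ) →ₗ[ℂ] ((Fin n → Fin N) → ℂ),
        Submodule.map g (LinearMap.range (Matrix.mulVecLin (FT N T))) =
          LinearMap.range (Matrix.mulVecLin (FT N T')) ∧
        (∀ x ∈ LinearMap.range (Matrix.mulVecLin (FT N T)), g x = 0 → x = 0) ∧
        (∀ X : Matrix (Fin N) (Fin N) ℂ,
          ∀ x ∈ LinearMap.range (Matrix.mulVecLin (FT N T)),
            g ((glAct N n X).mulVec x) = (glAct N n X).mulVec (g x))) := by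
  have hc : Function.Injective (content T) := fun i j h => by_contra fun hij => hcc i j hij h
  refine ⟨?_, fun X x hx => glAct_mulVec_mem_range FT_mem_permAlg X hx, fun U hUF hU =>
    (isPrimitive_FT hT hc).eq_bot_or_eq_range (star_FT hc) hUF hU, ?_⟩
  · intro h
    refine FT_ne_zero hT hrow hc (Matrix.mulVec_injective (funext fun x => ?_))
    rw [Matrix.zero_mulVec, ← Matrix.mulVecLin_apply, LinearMap.range_eq_bot.1 h,
      LinearMap.zero_apply]
  · intro T' hT' hrow' hcc' hrange
    have hc' : Function.Injective (content T') :=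
      fun i j h => by_contra fun hij => hcc' i j hij h
    obtain ⟨ρ, rfl⟩ : ∃ ρ : Equiv.Perm (Fin n), T' = T ∘ ρ := by
      refine ⟨(Equiv.ofInjective T' hT'.injective).trans
        ((Equiv.setCongr hrange).trans (Equiv.ofInjective T hT.injective).symm), ?_⟩
      funext i
      simp [Equiv.apply_ofInjective_symm]
    obtain ⟨u, hu, v, hv, -, -, e⟩ := permEquiv_FT (N := N) (ρ := 1) hT hc hT
    obtain ⟨u', hu', v', hv', -, -, e'⟩ := permEquiv_FT (N := N) hT hc hT'
    rw [Equiv.Perm.coe_one, Function.comp_id] at e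
    have h := mul_self_ne_zero_of_star_eq (star_FT hc) (FT_ne_zero hT hrow hc)
    have h' := mul_self_ne_zero_of_star_eq (star_FT hc') (FT_ne_zero hT' hrow' hc')
    rw [e] at h
    rw [e'] at h'
    obtain ⟨Z, hZ, hne⟩ := (isPrimitive_hookSymmetrizer hT hc).exists_mul_mul_ne_zero
      hookSymmetrizer_mem_permAlg hu hv hu' hv' h h'
    rw [← e, ← e'] at hne
    exact exists_isomorphism_of_mul_mul_ne_zero FT_mem_permAlg FT_mem_permAlg hZ
      (isPrimitive_FT hT hc) (isPrimitive_FT hT' hc') (star_FT hc) (star_FT hc') hne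

end
end
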